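/- arXiv:2211.15602 — 3 statements merged into one kernel-verified Lean document; each statement's English description precedes it below -/
import Mathlib

section
/- For all integers n ≥ 3 and k ≥ 2, the number of cycles in the digraph G_{n,k} equals ⌈α(k)^n⌉, where α(k) = (k − 1 + √((k−1)² + 4))/2; consequently F_k(n) ≥ α(k)^n. -/
open scoped Classical
open Finset

/-- Number of directed cycles in a finite directed multigraph on `Fin n`
specified by the edge-multiplicity function `G`: self-loops are cycles of
length 1, cycles of length `≥ 2` correspond to cyclic permutations, parallel
edges give distinct cycles, and cycles are counted up to cyclic rotation. -/
noncomputable def cycleCount (n : ℕ) (G : Fin n → Fin n → ℕ) : ℕ :=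
  (∑ v, G v v) +
  ∑ σ : Equiv.Perm (Fin n), if σ.IsCycle then ∏ v ∈ σ.support, G v (σ v) else 0

/-- Number of path-cycle subgraphs of a finite directed multigraph with
multiplicity function `G`: a path-cycle subgraph is given by a nonempty
vertex set `s` together with a successor map `f` on `s` (extended by the
identity off `s`) whose functional digraph on `s` is weakly connected and
has at most one source (vertex of indegree zero); parallel edges give
distinct path-cycles. -/
noncomputable def pathCycleCount {V : Type*} [Fintype V] [DecidableEq V]
    (G : V → V → ℕ) : ℕ :=
  ∑ s : Finset V, ∑ f : V → V,
    if s.Nonempty ∧ (∀ v, v ∉ s → f v = v) ∧ (∀ v ∈ s, f v ∈ s) ∧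
        (∀ u ∈ s, ∀ v ∈ s,
          Relation.ReflTransGen (fun a b => (a ∈ s ∧ f a = b) ∨ (b ∈ s ∧ f b = a)) u v) ∧
        (s.filter fun v => ∀ u ∈ s, f u ≠ v).card ≤ 1
    then ∏ v ∈ s, G v (f v) else 0

/-- `α(k) = (k - 1 + √((k-1)² + 4)) / 2`. -/
noncomputable def alphaK (k : ℕ) : ℝ :=
  ((k : ℝ) - 1 + Real.sqrt (((k : ℝ) - 1) ^ 2 + 4)) / 2

/-- Multiplicity function of the digraph `G_{n,k}`: on vertices `Fin n`,
edges `(i, i+1 mod n)` have multiplicity `k - 1` and edges `(i, i+2 mod n)`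
have multiplicity `1`. -/
def GnkMult (n k : ℕ) : Fin n → Fin n → ℕ := fun i j =>
  if (j.val + n - i.val) % n = 1 then k - 1
  else if (j.val + n - i.val) % n = 2 then 1
  else 0

/-- Multiplicity function of the digraph `G'_{n,k}`: on vertices `Fin n`,
edges `(i, i+1 mod n)` have multiplicity `1` and edges `(i, i+2 mod n)`
have multiplicity `k - 1`. -/
def Gnk'Mult (n k : ℕ) : Fin n → Fin n → ℕ := fun i j =>
  if (j.val + n - i.val) % n = 1 then 1
  else if (j.val + n - i.val) % n = 2 then k - 1
  else 0

/-- Edge relation of the simple digraph `G_m`: `(i, j)` is an edge whenever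
`j - i ≡ 1 (mod m)` or `j - i ≡ 2 (mod m)`. -/
def GmRel (m : ℕ) : Fin m → Fin m → Prop := fun i j =>
  (j.val + m - i.val) % m = 1 ∨ (j.val + m - i.val) % m = 2

/-- The sequence `S_m` with `S_0 = 1`, `S_1 = k - 1`,
`S_m = (k-1) S_{m-1} + S_{m-2}`. -/
def Sseq (k : ℕ) : ℕ → ℕ
  | 0 => 1
  | 1 => k - 1
  | (m + 2) => (k - 1) * Sseq k (m + 1) + Sseq k m

/-- `F_k(n)`: the maximum number of directed cycles over all digraphs on `n`
vertices with every outdegree exactly `k` in which every multi-edge between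
distinct vertices has multiplicity at most `k - 1`. -/
noncomputable def Fk (k n : ℕ) : ℕ :=
  sSup {c : ℕ | ∃ G : Fin n → Fin n → ℕ,
    (∀ v, (∑ u, G v u) = k) ∧ (∀ u v : Fin n, u ≠ v → G u v ≤ k - 1) ∧
    c = cycleCount n G}

/-- Weak connectivity (same connected component) in a directed multigraph. -/
def MConn {n : ℕ} (G : Fin n → Fin n → ℕ) : Fin n → Fin n → Prop :=
  Relation.ReflTransGen (fun a b => 0 < G a b ∨ 0 < G b a)

/-- A deterministic Markov decision problem with state space `S`, action
space `A` (all actions available at every state), deterministic transition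
function `T`, reward function `R` and discount factor `gamma ∈ [0, 1)`. -/
structure DMDP (S A : Type*) where
  T : S → A → S
  R : S → A → ℝ
  gamma : ℝ
  gamma_nonneg : 0 ≤ gamma
  gamma_lt_one : gamma < 1

namespace DMDP

variable {S A : Type*}

/-- The trajectory of states obtained by following policy `π` from `s`. -/
def traj (M : DMDP S A) (π : S → A) (s : S) (t : ℕ) : S :=
  (fun x => M.T x (π x))^[t] s

/-- The value function `V^π(s) = Σ_t γ^t R(s_t, π(s_t))`. -/
noncomputable def V (M : DMDP S A) (π : S → A) (s : S) : ℝ :=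
  ∑' t : ℕ, M.gamma ^ t * M.R (M.traj π s t) (π (M.traj π s t))

/-- The action value function `Q^π(s, a) = R(s, a) + γ V^π(T(s, a))`. -/
noncomputable def Q (M : DMDP S A) (π : S → A) (s : S) (a : A) : ℝ :=
  M.R s a + M.gamma * M.V π (M.T s a)

/-- `π ≺ π'`: pointwise `V^π ≤ V^{π'}` with strict inequality somewhere. -/
def PLt (M : DMDP S A) (π π' : S → A) : Prop :=
  (∀ s, M.V π s ≤ M.V π' s) ∧ ∃ s, M.V π s < M.V π' s

/-- `π'` is obtained from `π` by policy improvement with arbitrary action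
selection. -/
def ImpStep (M : DMDP S A) (π π' : S → A) : Prop :=
  π' ≠ π ∧ ∀ s, π' s ≠ π s → M.V π s < M.Q π s (π' s)

/-- `π'` is obtained from `π` by policy improvement with max-gain action
selection. -/
def MaxGainStep (M : DMDP S A) (π π' : S → A) : Prop :=
  π' ≠ π ∧ ∀ s, π' s ≠ π s →
    M.V π s < M.Q π s (π' s) ∧
    ∀ a, M.V π s < M.Q π s a → M.Q π s a ≤ M.Q π s (π' s)

/-- The first time step at which a previously visited state recurs on the
trajectory of `π` from `s`. -/
noncomputable def pcLen (M : DMDP S A) (π : S → A) (s : S) : ℕ :=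
  sInf {t : ℕ | ∃ t' < t, M.traj π s t' = M.traj π s t}

/-- The path-cycle `P^π_s`: the sequence of state–action–state triples
`(s_t, π(s_t), s_{t+1})` for `t` up to (but excluding) the first recurrence
of a previously visited state. -/
noncomputable def pathCycle (M : DMDP S A) (π : S → A) (s : S) : List (S × A × S) :=
  (List.range (M.pcLen π s)).map fun t =>
    (M.traj π s t, π (M.traj π s t), M.traj π s (t + 1))

/-- The multiplicity function of the DMDP digraph `G_M`: one edge from `s`
to `T(s, a)` for every action `a`. -/
noncomputable def digraph (M : DMDP S A) [Fintype A] : S → S → ℕ :=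
  fun s s' => (Finset.univ.filter fun a => M.T s a = s').card

/-- A state is non-branching if all actions lead to the same next state. -/
def NonBranching (M : DMDP S A) (s : S) : Prop := ∃ s', ∀ a, M.T s a = s'

/-- The relation `∼` on path-cycles: same sequence of states, and wherever
the actions differ the state is non-branching. -/
def PCSim (M : DMDP S A) (P₁ P₂ : List (S × A × S)) : Prop :=
  P₁.length = P₂.length ∧
  ∀ (t : ℕ) (h₁ : t < P₁.length) (h₂ : t < P₂.length),
    (P₁.get ⟨t, h₁⟩).1 = (P₂.get ⟨t, h₂⟩).1 ∧
    (P₁.get ⟨t, h₁⟩).2.2 = (P₂.get ⟨t, h₂⟩).2.2 ∧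
    ((P₁.get ⟨t, h₁⟩).2.1 ≠ (P₂.get ⟨t, h₂⟩).2.1 → M.NonBranching (P₁.get ⟨t, h₁⟩).1)

/-- The relation `≈` on path-cycles: they differ only in equivalent edges,
i.e. have the same sequences of source and target states. -/
def PCApprox (_M : DMDP S A) (P₁ P₂ : List (S × A × S)) : Prop :=
  P₁.length = P₂.length ∧
  ∀ (t : ℕ) (h₁ : t < P₁.length) (h₂ : t < P₂.length),
    (P₁.get ⟨t, h₁⟩).1 = (P₂.get ⟨t, h₂⟩).1 ∧
    (P₁.get ⟨t, h₁⟩).2.2 = (P₂.get ⟨t, h₂⟩).2.2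

end DMDP

section Transfer

/-- Entries of a power of a matrix as sums over walks. -/
theorem Matrix.pow_succ_apply_eq_sum_walk {B : Type*} [Fintype B] [DecidableEq B]
    (A : Matrix B B ℕ) (n : ℕ) (x y : B) :
    (A ^ (n + 1)) x y = ∑ f : Fin n → B,
      (∏ i : Fin n, A ((Fin.cons x f : Fin (n + 1) → B) i.castSucc) (f i)) *
        A ((Fin.cons x f : Fin (n + 1) → B) (Fin.last n)) y := by
  induction n generalizing x with
  | zero => simp
  | succ n ih =>
    rw [pow_succ', Matrix.mul_apply, ← (Fin.consEquiv fun _ : Fin (n + 1) => B).sum_comp,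
      Fintype.sum_prod_type]
    refine Finset.sum_congr rfl fun z _ => ?_
    rw [ih, Finset.mul_sum]
    refine Finset.sum_congr rfl fun f _ => ?_
    rw [Fin.prod_univ_succ]
    simp only [Fin.consEquiv_apply, Fin.castSucc_zero, Fin.cons_zero, Fin.castSucc_succ,
      Fin.cons_succ, ← Fin.succ_last, mul_assoc]

/-- The trace of a power of a matrix as a sum over closed walks. -/
theorem Matrix.trace_pow_succ_eq_sum_closed_walk {B : Type*} [Fintype B] [DecidableEq B]
    (A : Matrix B B ℕ) (n : ℕ) :
    (A ^ (n + 1)).trace = ∑ f : Fin (n + 1) → B, ∏ i, A (f i) (f (i + 1)) := by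
  rw [← (Fin.consEquiv fun _ : Fin (n + 1) => B).sum_comp, Fintype.sum_prod_type, Matrix.trace]
  refine Finset.sum_congr rfl fun z _ => ?_
  rw [Matrix.diag_apply, Matrix.pow_succ_apply_eq_sum_walk]
  refine Finset.sum_congr rfl fun f _ => ?_
  rw [Fin.prod_univ_castSucc]
  simp [Fin.consEquiv_apply]

/-- Transfer matrix recording which vertices lie on a cycle of `G_{n,k}` winding once. -/
def stepMatrix (a : ℕ) : Matrix Bool Bool ℕ := fun x y =>
  if x then (if y then a else 1) else (if y then 1 else 0)

theorem stepMatrix_sq (a : ℕ) : stepMatrix a ^ 2 = a • stepMatrix a + 1 := by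
  ext x y
  rw [sq, Matrix.add_apply, Matrix.smul_apply, smul_eq_mul, Matrix.mul_apply]
  cases x <;> cases y <;> simp [stepMatrix]

theorem trace_stepMatrix_pow (a : ℕ) (x y : ℝ) (hsum : x + y = a) (hmul : x * y = -1) (n : ℕ) :
    ((stepMatrix a ^ n).trace : ℝ) = x ^ n + y ^ n := by
  induction n using Nat.twoStepInduction with
  | zero => simp; norm_num
  | one => simp [Matrix.trace, stepMatrix, hsum]
  | more n ih ih' =>
    rw [pow_add, stepMatrix_sq, mul_add, mul_smul_comm, ← pow_succ, mul_one, Matrix.trace_add,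
      Matrix.trace_smul]
    push_cast
    rw [smul_eq_mul, Nat.cast_mul, ih, ih', ← hsum]
    linear_combination (x ^ n + y ^ n) * hmul

end Transfer

section Cycles

open scoped Fin.CommRing

variable {m : ℕ}

theorem Fin.cyclic_induction {P : Fin (m + 3) → Prop} {v : Fin (m + 3)} (hv : P v)
    (hs : ∀ u, P u → P (u + 1)) (u : Fin (m + 3)) : P u := by
  have h : ∀ j : ℕ, P (v + j) := by
    intro j
    induction j with
    | zero => simpa using hv
    | succ j ih => simpa [add_assoc] using hs _ ih
  have := h (u - v).val
  rwa [Fin.cast_val_eq_self, add_sub_cancel] at this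

theorem Fin.add_one_ne_self' (v : Fin (m + 3)) : v + 1 ≠ v := by
  simp

theorem Fin.two_ne_zero' : (2 : Fin (m + 3)) ≠ 0 := by
  intro h
  have := congrArg Fin.val h
  simp [Nat.mod_eq_of_lt (show 2 < m + 3 by omega)] at this

theorem Fin.add_two_ne_self (v : Fin (m + 3)) : v + 2 ≠ v := by
  rw [Ne, add_eq_left]
  exact Fin.two_ne_zero'

theorem Fin.add_two_ne_add_one (v : Fin (m + 3)) : v + 2 ≠ v + 1 := by
  rw [← one_add_one_eq_two, ← add_assoc]
  exact Fin.add_one_ne_self' _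

theorem GnkMult_apply (k : ℕ) (i j : Fin (m + 3)) :
    GnkMult (m + 3) k i j = if j = i + 1 then k - 1 else if j = i + 2 then 1 else 0 := by
  have hval : (j.val + (m + 3) - i.val) % (m + 3) = (j - i).val := by
    rw [Fin.val_sub]
    congr 1
    omega
  have h1 : (j - i).val = 1 ↔ j = i + 1 := by
    rw [← sub_eq_iff_eq_add', Fin.ext_iff]
    simp
  have h2 : (j - i).val = 2 ↔ j = i + 2 := by
    rw [← sub_eq_iff_eq_add', Fin.ext_iff]
    simp [Nat.mod_eq_of_lt (show 2 < m + 3 by omega)]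
  simp only [GnkMult, hval, h1, h2]

/-- The successor map of a vertex set, given by its indicator, whose gaps have length at most 2. -/
def nextVertex (f : Fin (m + 3) → Bool) (v : Fin (m + 3)) : Fin (m + 3) :=
  if f v then (if f (v + 1) then v + 1 else v + 2) else v

theorem nextVertex_ne_self_iff (f : Fin (m + 3) → Bool) (v : Fin (m + 3)) :
    nextVertex f v ≠ v ↔ f v = true := by
  unfold nextVertex
  split_ifs with h1 h2 <;> simp [h1, Fin.two_ne_zero']

/-- No two consecutive vertices are missing. -/
def NoDoubleGap (f : Fin (m + 3) → Bool) : Prop := ∀ v, f v = true ∨ f (v + 1) = true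

theorem NoDoubleGap.nextVertex_mem {f : Fin (m + 3) → Bool} (hf : NoDoubleGap f)
    {v : Fin (m + 3)} (hv : f v = true) : f (nextVertex f v) = true := by
  unfold nextVertex
  rw [if_pos hv]
  split_ifs with h
  · exact h
  · have := (hf (v + 1)).resolve_left h
    rwa [add_assoc, one_add_one_eq_two] at this

theorem NoDoubleGap.nextVertex_injective {f : Fin (m + 3) → Bool} (hf : NoDoubleGap f) :
    Function.Injective (nextVertex f) := by
  have key : ∀ u v, f u = true → f v = true → u + 1 = v + 2 → ¬ f (v + 1) = true → False := by
    intro u v hu _ h hv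
    have h : u = v + 1 := by linear_combination h
    exact hv (h ▸ hu)
  intro u v huv
  by_cases hu : f u = true <;> by_cases hv : f v = true
  · simp only [nextVertex, if_pos hu, if_pos hv] at huv
    split_ifs at huv with h1 h2 h2
    · simpa using huv
    · exact (key u v hu hv huv h2).elim
    · exact (key v u hv hu huv.symm h1).elim
    · simpa using huv
  · have := hf.nextVertex_mem hu
    rw [huv, nextVertex, if_neg hv] at this
    exact (hv this).elim
  · have := hf.nextVertex_mem hv
    rw [← huv, nextVertex, if_neg hu] at this
    exact (hu this).elim
  · simpa [nextVertex, hu, hv] using huv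

/-- The cyclic permutation traversing a vertex set with gaps of length at most 2. -/
noncomputable def nextPerm (f : Fin (m + 3) → Bool) (hf : NoDoubleGap f) :
    Equiv.Perm (Fin (m + 3)) :=
  Equiv.ofBijective (nextVertex f) (Finite.injective_iff_bijective.1 hf.nextVertex_injective)

theorem nextPerm_apply (f : Fin (m + 3) → Bool) (hf : NoDoubleGap f) (v : Fin (m + 3)) :
    nextPerm f hf v = nextVertex f v := rfl

theorem nextPerm_isCycle (f : Fin (m + 3) → Bool) (hf : NoDoubleGap f) :
    (nextPerm f hf).IsCycle := by
  obtain ⟨v, hv⟩ : ∃ v, f v = true := by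
    rcases hf 0 with h | h
    exacts [⟨_, h⟩, ⟨_, h⟩]
  have reach : ∀ j : ℕ, f (v + j) = true → (nextPerm f hf).SameCycle v (v + j) := by
    intro j
    induction j using Nat.twoStepInduction with
    | zero => intro _; simpa using Equiv.Perm.SameCycle.refl _ v
    | one =>
      intro h
      refine ⟨1, ?_⟩
      rw [Nat.cast_one] at h
      simp [nextPerm_apply, nextVertex, hv, h]
    | more j ih ih' =>
      intro h
      have e1 : v + ((j + 1 : ℕ) : Fin (m + 3)) = v + j + 1 := by push_cast; ring
      have e2 : v + ((j + 2 : ℕ) : Fin (m + 3)) = v + j + 2 := by push_cast; ring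
      have e3 : v + (j : Fin (m + 3)) + 1 + 1 = v + j + 2 := by ring
      rw [e1] at ih'
      rw [e2] at h ⊢
      by_cases h1 : f (v + j + 1) = true
      · have := (Equiv.Perm.sameCycle_apply_right).2 (ih' h1)
        rwa [nextPerm_apply, nextVertex, if_pos h1, e3, if_pos h] at this
      · have h0 := (hf (v + j)).resolve_right h1
        have := (Equiv.Perm.sameCycle_apply_right).2 (ih h0)
        rwa [nextPerm_apply, nextVertex, if_pos h0, if_neg h1] at this
  refine ⟨v, (nextVertex_ne_self_iff f v).2 hv, fun u hu => ?_⟩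
  have := reach (u - v).val
  rw [Fin.cast_val_eq_self, add_sub_cancel] at this
  exact this ((nextVertex_ne_self_iff f u).1 hu)

/-- The indicator of the support of a permutation. -/
def supportIndicator (σ : Equiv.Perm (Fin (m + 3))) (v : Fin (m + 3)) : Bool := decide (σ v ≠ v)

theorem supportIndicator_eq_true (σ : Equiv.Perm (Fin (m + 3))) (v : Fin (m + 3)) :
    supportIndicator σ v = true ↔ σ v ≠ v := by
  simp [supportIndicator]

theorem supportIndicator_nextPerm (f : Fin (m + 3) → Bool) (hf : NoDoubleGap f) :
    supportIndicator (nextPerm f hf) = f := by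
  funext v
  rw [Bool.eq_iff_iff, supportIndicator_eq_true, nextPerm_apply, nextVertex_ne_self_iff]

/-- A permutation advancing every moved vertex by 1 or 2 either advances all of them by 2, or moves
each vertex to the next vertex of its support. -/
theorem eq_nextVertex_of_step (σ : Equiv.Perm (Fin (m + 3)))
    (hstep : ∀ v, σ v ≠ v → σ v = v + 1 ∨ σ v = v + 2) (hσ : σ ≠ Equiv.addRight 2)
    (v : Fin (m + 3)) : σ v = nextVertex (supportIndicator σ) v := by
  simp only [nextVertex, supportIndicator_eq_true]
  split_ifs with h1 h2
  · refine (hstep v h1).resolve_right fun h => hσ ?_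
    suffices ∀ u, σ u = u + 2 ∧ σ (u + 1) ≠ u + 1 from Equiv.ext fun u => (this u).1
    refine Fin.cyclic_induction ⟨h, h2⟩ fun u hu => ?_
    have e : u + 1 + 1 = u + 2 := by ring
    have hu1 : σ (u + 1) = u + 1 + 2 := by
      refine (hstep _ hu.2).resolve_left fun h' => ?_
      rw [e, ← hu.1] at h'
      exact Fin.add_one_ne_self' u (σ.injective h')
    refine ⟨hu1, fun h' => ?_⟩
    rw [e, ← hu.1] at h'
    exact Fin.add_two_ne_self u (hu.1 ▸ σ.injective h')
  · refine (hstep v h1).resolve_left fun h => ?_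
    rw [not_not, ← h] at h2
    exact h1 (σ.injective h2)
  · exact not_not.1 h1

theorem noDoubleGap_of_step (σ : Equiv.Perm (Fin (m + 3))) (hne : ∃ v, σ v ≠ v)
    (hstep : ∀ v, σ v ≠ v → σ v = v + 1 ∨ σ v = v + 2) : NoDoubleGap (supportIndicator σ) := by
  obtain ⟨v, hv⟩ := hne
  simp only [NoDoubleGap, supportIndicator_eq_true]
  refine Fin.cyclic_induction (v := v) (Or.inl hv) ?_
  rintro u (hu | hu)
  · have h : σ (σ u) ≠ σ u := fun h => hu (σ.injective h)
    rcases hstep u hu with h' | h'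
    · exact Or.inl (h' ▸ h)
    · right
      rw [h'] at h
      rwa [add_assoc, one_add_one_eq_two]
  · exact Or.inl hu

theorem isCycle_addRight_two_iff :
    (Equiv.addRight (2 : Fin (m + 3))).IsCycle ↔ Odd (m + 3) := by
  have hmove : ∀ v : Fin (m + 3), Equiv.addRight (2 : Fin (m + 3)) v ≠ v := Fin.add_two_ne_self
  have hpow : ∀ (j : ℕ) (v : Fin (m + 3)),
      (Equiv.addRight (2 : Fin (m + 3)) ^ j) v = v + 2 * j := by
    intro j v
    induction j with
    | zero => simp
    | succ j ih =>
      rw [pow_succ', Equiv.Perm.mul_apply, ih, Equiv.coe_addRight]; push_cast; ring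
  constructor
  · intro h
    obtain ⟨j, hj⟩ := (h.sameCycle (hmove 0) (hmove 1)).exists_nat_pow_eq
    rw [hpow, zero_add] at hj
    by_contra hodd
    rw [Nat.not_odd_iff_even, even_iff_two_dvd] at hodd
    have hj' : (((2 * j : ℕ) : Fin (m + 3)) : Fin (m + 3)).val = 1 := by
      push_cast; rw [hj]; simp
    rw [Fin.val_natCast] at hj'
    have := (Nat.dvd_mod_iff hodd).2 (dvd_mul_right 2 j)
    rw [hj'] at this
    omega
  · rintro ⟨r, hr⟩
    refine ⟨0, hmove 0, fun y _ => ⟨((r + 1) * y.val : ℕ), ?_⟩⟩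
    rw [zpow_natCast, hpow, zero_add]
    have hn : ((2 * r + 1 : ℕ) : Fin (m + 3)) = 0 := by rw [← hr]; exact Fin.natCast_self _
    push_cast at hn ⊢
    linear_combination y * hn

theorem prod_stepMatrix_eq_zero (a : ℕ) {f : Fin (m + 3) → Bool} (hf : ¬ NoDoubleGap f) :
    ∏ v, stepMatrix a (f v) (f (v + 1)) = 0 := by
  simp only [NoDoubleGap, not_forall, not_or, Bool.not_eq_true] at hf
  obtain ⟨v, h1, h2⟩ := hf
  exact Finset.prod_eq_zero (Finset.mem_univ v) (by simp [h1, h2, stepMatrix])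

theorem prod_GnkMult_eq (k : ℕ) (σ : Equiv.Perm (Fin (m + 3)))
    (hgap : NoDoubleGap (supportIndicator σ))
    (hσ : ∀ v, σ v = nextVertex (supportIndicator σ) v) :
    ∏ v ∈ σ.support, GnkMult (m + 3) k v (σ v) =
      ∏ v, stepMatrix (k - 1) (supportIndicator σ v) (supportIndicator σ (v + 1)) := by
  refine Finset.prod_subset_one_on_sdiff (Finset.subset_univ _) (fun v hv => ?_) fun v hv => ?_
  · have h0 : supportIndicator σ v = false := by
      simpa [supportIndicator] using hv
    have h1 := (hgap v).resolve_left (by simp [h0])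
    simp [h0, h1, stepMatrix]
  · have h0 : supportIndicator σ v = true := by
      simpa [supportIndicator] using hv
    rw [GnkMult_apply, hσ v, nextVertex, if_pos h0]
    by_cases h1 : supportIndicator σ (v + 1) = true
    · simp [h0, h1, stepMatrix]
    · rw [if_neg h1, if_neg (Fin.add_two_ne_add_one v), if_pos rfl]
      simp [h0, h1, stepMatrix]

theorem cycleCount_GnkMult (k : ℕ) :
    cycleCount (m + 3) (GnkMult (m + 3) k) =
      (stepMatrix (k - 1) ^ (m + 3)).trace + if Odd (m + 3) then 1 else 0 := by
  have hloop : ∀ v : Fin (m + 3), GnkMult (m + 3) k v v = 0 := by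
    intro v
    simp [GnkMult]
  unfold cycleCount
  rw [Finset.sum_eq_zero fun v _ => hloop v, zero_add,
    ← Finset.sum_erase_add _ _ (Finset.mem_univ (Equiv.addRight (2 : Fin (m + 3)))),
    Matrix.trace_pow_succ_eq_sum_closed_walk]
  congr 1
  · have hdata : ∀ σ ∈ Finset.univ.erase (Equiv.addRight (2 : Fin (m + 3))),
        (if σ.IsCycle then ∏ v ∈ σ.support, GnkMult (m + 3) k v (σ v) else 0) ≠ 0 →
        σ.IsCycle ∧ NoDoubleGap (supportIndicator σ) ∧
          ∀ v, σ v = nextVertex (supportIndicator σ) v := by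
      intro σ hσ hne
      have hcyc : σ.IsCycle := by
        by_contra h
        exact hne (if_neg h)
      rw [if_pos hcyc, Finset.prod_ne_zero_iff] at hne
      have hstep : ∀ v, σ v ≠ v → σ v = v + 1 ∨ σ v = v + 2 := by
        intro v hv
        have := hne v (Equiv.Perm.mem_support.2 hv)
        rw [GnkMult_apply] at this
        by_contra! h
        simp [h] at this
      obtain ⟨v, hv, _⟩ := id hcyc
      exact ⟨hcyc, noDoubleGap_of_step σ ⟨v, hv⟩ hstep,
        eq_nextVertex_of_step σ hstep (Finset.ne_of_mem_erase hσ)⟩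
    refine Finset.sum_bij_ne_zero (fun σ _ _ => supportIndicator σ)
      (fun _ _ _ => Finset.mem_univ _) ?_ ?_ ?_
    · intro σ h1 h2 τ h3 h4 h
      ext1 v
      rw [(hdata σ h1 h2).2.2, (hdata τ h3 h4).2.2, h]
    · intro f _ hf
      have hgap : NoDoubleGap f := not_not.1 fun h => hf (prod_stepMatrix_eq_zero _ h)
      have hind := supportIndicator_nextPerm f hgap
      refine ⟨nextPerm f hgap, ?_, ?_, hind⟩
      · refine Finset.mem_erase.2 ⟨fun h => ?_, Finset.mem_univ _⟩
        have hall : ∀ v, f v = true := fun v => by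
          rw [← hind, h, supportIndicator_eq_true]
          exact Fin.add_two_ne_self v
        have h0 := DFunLike.congr_fun h 0
        rw [nextPerm_apply, nextVertex, if_pos (hall _), if_pos (hall _)] at h0
        exact Fin.add_two_ne_add_one 0 h0.symm
      · rw [if_pos (nextPerm_isCycle f hgap), prod_GnkMult_eq, hind]
        · exact hf
        · rwa [hind]
        · rw [hind]; exact nextPerm_apply f hgap
    · intro σ h1 h2
      obtain ⟨hc, hg, hn⟩ := hdata σ h1 h2
      rw [if_pos hc, prod_GnkMult_eq k σ hg hn]
  · refine if_congr isCycle_addRight_two_iff (Finset.prod_eq_one fun v _ => ?_) rfl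
    rw [GnkMult_apply, Equiv.coe_addRight, if_neg (Fin.add_two_ne_add_one v), if_pos rfl]

theorem sum_GnkMult (k : ℕ) (hk : 1 ≤ k) (v : Fin (m + 3)) :
    ∑ u, GnkMult (m + 3) k v u = k := by
  have h : ∀ u, GnkMult (m + 3) k v u =
      (if u = v + 1 then k - 1 else 0) + if u = v + 2 then 1 else 0 := by
    intro u
    rw [GnkMult_apply]
    by_cases h1 : u = v + 1
    · have h2 : u ≠ v + 2 := fun h2 => Fin.add_two_ne_add_one v (h2.symm.trans h1)
      rw [if_pos h1, if_pos h1, if_neg h2]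
      rfl
    · rw [if_neg h1, if_neg h1, zero_add]
  simp only [h, Finset.sum_add_distrib, Finset.sum_ite_eq', Finset.mem_univ, if_true]
  omega

end Cycles

theorem le_Fk {n k : ℕ} (G : Fin n → Fin n → ℕ) (hdeg : ∀ v, ∑ u, G v u = k)
    (hmul : ∀ u v, u ≠ v → G u v ≤ k - 1) : cycleCount n G ≤ Fk k n := by
  refine le_csSup ?_ ⟨G, hdeg, hmul, rfl⟩
  refine ((Set.finite_Iic (fun _ _ => k : Fin n → Fin n → ℕ)).image (cycleCount n)).bddAbove.mono ?_
  rintro c ⟨H, hH, _, rfl⟩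
  exact ⟨H, fun v u => hH v ▸ Finset.single_le_sum (fun _ _ => Nat.zero_le _) (Finset.mem_univ u),
    rfl⟩

theorem exists_conjugate_alphaK (k : ℕ) (hk : 2 ≤ k) :
    ∃ y : ℝ, -1 < y ∧ y < 0 ∧ alphaK k + y = (k - 1 : ℕ) ∧ alphaK k * y = -1 := by
  have hk' : (2 : ℝ) ≤ k := by exact_mod_cast hk
  have hs : Real.sqrt (((k : ℝ) - 1) ^ 2 + 4) ^ 2 = ((k : ℝ) - 1) ^ 2 + 4 :=
    Real.sq_sqrt (by positivity)
  have hpos := Real.sqrt_nonneg (((k : ℝ) - 1) ^ 2 + 4)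
  unfold alphaK
  generalize Real.sqrt (((k : ℝ) - 1) ^ 2 + 4) = s at hs hpos
  refine ⟨((k : ℝ) - 1 - s) / 2, by nlinarith, by nlinarith, ?_, by linarith⟩
  rw [Nat.cast_sub (by omega)]
  push_cast
  ring

theorem ceil_alphaK_pow (n k : ℕ) (hn : n ≠ 0) (hk : 2 ≤ k) :
    (((stepMatrix (k - 1) ^ n).trace + if Odd n then 1 else 0 : ℕ) : ℤ) = ⌈alphaK k ^ n⌉ := by
  obtain ⟨y, hy1, hy0, hsum, hmul⟩ := exists_conjugate_alphaK k hk
  have htr := trace_stepMatrix_pow (k - 1) _ y hsum hmul n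
  have habs : |y ^ n| < 1 := by
    rw [abs_pow]
    exact pow_lt_one₀ (abs_nonneg y) (abs_lt.2 ⟨hy1, by linarith⟩) hn
  obtain ⟨h1, h2⟩ := abs_lt.1 habs
  symm
  rw [Int.ceil_eq_iff]
  push_cast
  split_ifs with hodd
  · have := hodd.pow_neg hy0
    constructor <;> linarith
  · have := (Nat.not_odd_iff_even.1 hodd).pow_pos hy0.ne
    constructor <;> linarith

theorem stmt_6 (n k : ℕ) (hn : 3 ≤ n) (hk : 2 ≤ k) :
    (cycleCount n (GnkMult n k) : ℤ) = ⌈alphaK k ^ n⌉ ∧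
    alphaK k ^ n ≤ (Fk k n : ℝ) := by
  obtain ⟨m, rfl⟩ := Nat.exists_eq_add_of_le' hn
  have hcount : (cycleCount (m + 3) (GnkMult (m + 3) k) : ℤ) = ⌈alphaK k ^ (m + 3)⌉ := by
    rw [cycleCount_GnkMult]
    exact ceil_alphaK_pow _ k (by omega) hk
  refine ⟨hcount, ?_⟩
  have hle : cycleCount (m + 3) (GnkMult (m + 3) k) ≤ Fk k (m + 3) := by
    refine le_Fk _ (sum_GnkMult k (by omega)) fun u v _ => ?_
    rw [GnkMult_apply]
    split_ifs <;> omega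
  calc alphaK k ^ (m + 3) ≤ (⌈alphaK k ^ (m + 3)⌉ : ℝ) := Int.le_ceil _
    _ = (cycleCount (m + 3) (GnkMult (m + 3) k) : ℝ) := by rw [← hcount, Int.cast_natCast]
    _ ≤ Fk k (m + 3) := by exact_mod_cast hle
end

section
/- For all integers n ≥ 1 and k ≥ 2, every digraph G with n vertices, no multi-edges (self-loops allowed), and every vertex of outdegree at most k satisfies C'(G) ≤ n²·k·((k+1)!)^((n−1)/(k+1)), where C'(G) is the number of path-cycle subgraphs of G. -/
open scoped Classical
open Finset

/-- The permutations `σ` with `σ i ∈ A i` for all `i`; their number is the permanent of the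
`0`-`1` matrix whose rows are the indicator functions of the sets `A i`. -/
noncomputable def permsIn {α : Type*} [Fintype α] (A : α → Finset α) : Finset (Equiv.Perm α) :=
  univ.filter fun σ => ∀ i, σ i ∈ A i

theorem mem_permsIn {α : Type*} [Fintype α] {A : α → Finset α} {σ : Equiv.Perm α} :
    σ ∈ permsIn A ↔ ∀ i, σ i ∈ A i := by
  simp [permsIn]

/-- The logarithm of `(r!) ^ (1 / r)`. -/
noncomputable def logFactorialMean (r : ℕ) : ℝ := Real.log (r.factorial : ℝ) / r

theorem mul_logFactorialMean (r : ℕ) :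
    (r : ℝ) * logFactorialMean r = Real.log (r.factorial : ℝ) := by
  rcases Nat.eq_zero_or_pos r with rfl | hr
  · simp
  · have : (r : ℝ) ≠ 0 := by positivity
    rw [logFactorialMean]
    field_simp

theorem logFactorialMean_one : logFactorialMean 1 = 0 := by
  simp [logFactorialMean]

theorem log_factorial_succ (r : ℕ) :
    Real.log ((r + 1).factorial : ℝ) = Real.log ((r : ℝ) + 1) + Real.log (r.factorial : ℝ) := by
  have h1 : (r : ℝ) + 1 ≠ 0 := by positivity
  have h2 : (r.factorial : ℝ) ≠ 0 := by positivity
  rw [Nat.factorial_succ]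
  push_cast
  exact Real.log_mul h1 h2

theorem log_factorial_le (r : ℕ) :
    Real.log (r.factorial : ℝ) ≤ r * Real.log ((r : ℝ) + 1) := by
  induction r with
  | zero => simp
  | succ r ih =>
    rw [log_factorial_succ]
    have h : Real.log ((r : ℝ) + 1) ≤ Real.log ((r : ℝ) + 1 + 1) :=
      Real.log_le_log (by positivity) (by linarith)
    push_cast
    nlinarith [(Nat.cast_nonneg r : (0 : ℝ) ≤ r)]

theorem logFactorialMean_mono : Monotone logFactorialMean := by
  refine monotone_nat_of_le_succ fun r => ?_
  rcases Nat.eq_zero_or_pos r with rfl | hr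
  · simp [logFactorialMean]
  · have hr' : (0 : ℝ) < r := by positivity
    rw [logFactorialMean, logFactorialMean, log_factorial_succ]
    push_cast
    rw [div_le_div_iff₀ hr' (by positivity)]
    nlinarith [log_factorial_le r]

theorem sum_mul_log_le {ι : Type*} (s : Finset ι) (hs : s.Nonempty) (t : ι → ℝ)
    (ht : ∀ i ∈ s, 0 ≤ t i) (hpos : 0 < ∑ i ∈ s, t i) :
    (∑ i ∈ s, t i) * Real.log (∑ i ∈ s, t i) ≤
      (∑ i ∈ s, t i) * Real.log (s.card : ℝ) + ∑ i ∈ s, t i * Real.log (t i) := by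
  have hr : (0 : ℝ) < s.card := by exact_mod_cast hs.card_pos
  have key := Real.convexOn_mul_log.map_sum_le (t := s) (w := fun _ => (s.card : ℝ)⁻¹) (p := t)
    (fun _ _ => by positivity) (by simp [hr.ne']) (fun i hi => ht i hi)
  simp only [smul_eq_mul, ← Finset.mul_sum] at key
  rw [Real.log_mul (by positivity) hpos.ne', Real.log_inv, mul_assoc] at key
  have := le_of_mul_le_mul_left key (by positivity)
  linarith

/-- Fixing `σ i = c` in the permanent of `A`. -/
noncomputable def fixEntry {α : Type*} (A : α → Finset α) (i c : α) : α → Finset α :=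
  fun a => if a = i then {c} else (A a).erase c

theorem permsIn_fixEntry {α : Type*} [Fintype α] (A : α → Finset α) (i c : α) (hc : c ∈ A i) :
    permsIn (fixEntry A i c) = (permsIn A).filter fun σ => σ i = c := by
  ext σ
  simp only [mem_permsIn, mem_filter, fixEntry]
  constructor
  · intro h
    have hi : σ i = c := by simpa using h i
    refine ⟨fun a => ?_, hi⟩
    by_cases ha : a = i
    · subst ha; rwa [hi]
    · have := h a
      rw [if_neg ha] at this
      exact mem_of_mem_erase this
  · rintro ⟨h, hi⟩ a
    by_cases ha : a = i
    · subst ha; simp [hi]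
    · rw [if_neg ha]
      exact mem_erase.2 ⟨fun e => ha (σ.injective (e.trans hi.symm)), h a⟩

theorem sum_logFactorialMean_erase {α : Type*} [Fintype α] (U : Finset α) (A : α → Finset α)
    (hA : ∀ i, i ∉ U → ∃ c, A i = {c} ∧ ∀ j, j ≠ i → c ∉ A j)
    (σ : Equiv.Perm α) (hσ : σ ∈ permsIn A) (j : α) (hj : j ∈ U) :
    ∑ i ∈ U.erase j, logFactorialMean ((A j).erase (σ i)).card =
      (U.card : ℝ) * logFactorialMean (A j).card - Real.log ((A j).card : ℝ) := by
  rw [mem_permsIn] at hσ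
  have himg : (U.filter fun i => σ i ∈ A j).image σ = A j := by
    ext c
    simp only [mem_image, mem_filter]
    constructor
    · rintro ⟨i, ⟨-, h⟩, rfl⟩
      exact h
    · intro hc
      refine ⟨σ.symm c, ⟨?_, by simpa using hc⟩, by simp⟩
      by_contra hU
      obtain ⟨d, hd, hd'⟩ := hA _ hU
      have h1 := hσ (σ.symm c)
      rw [hd, Equiv.apply_symm_apply, mem_singleton] at h1
      subst h1
      exact hd' j (fun e => hU (e ▸ hj)) hc
  have hcard : (U.filter fun i => σ i ∈ A j).card = (A j).card := by
    conv_rhs => rw [← himg]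
    exact (card_image_of_injective _ σ.injective).symm
  have hcard' : ((U.erase j).filter fun i => σ i ∈ A j).card = (A j).card - 1 := by
    rw [filter_erase, card_erase_of_mem (mem_filter.2 ⟨hj, hσ j⟩), hcard]
  obtain ⟨r, hr⟩ : ∃ r, (A j).card = r + 1 :=
    Nat.exists_eq_succ_of_ne_zero (card_ne_zero_of_mem (hσ j))
  have hterm : ∀ i ∈ U.erase j, logFactorialMean ((A j).erase (σ i)).card =
      logFactorialMean (r + 1) +
        if σ i ∈ A j then logFactorialMean r - logFactorialMean (r + 1) else 0 := by
    intro i _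
    split_ifs with h
    · rw [card_erase_of_mem h, hr]; simp
    · rw [erase_eq_of_notMem h, hr]; simp
  rw [sum_congr rfl hterm, sum_add_distrib, sum_const, ← sum_filter, sum_const, hcard',
    card_erase_of_mem hj, hr, nsmul_eq_mul, nsmul_eq_mul,
    Nat.cast_sub (card_pos.2 ⟨j, hj⟩)]
  have e1 := mul_logFactorialMean r
  have e2 := mul_logFactorialMean (r + 1)
  rw [log_factorial_succ] at e2
  push_cast at e2 ⊢
  linarith

/-- Brègman's bound on permanents, where the rows outside `U` each have a single entry, in a
column that no other row meets. -/
theorem log_card_permsIn_le_sum {α : Type*} [Fintype α] (U : Finset α) :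
    ∀ A : α → Finset α, (∀ i, i ∉ U → ∃ c, A i = {c} ∧ ∀ j, j ≠ i → c ∉ A j) →
      (permsIn A).Nonempty →
      Real.log ((permsIn A).card : ℝ) ≤ ∑ i ∈ U, logFactorialMean (A i).card := by
  induction U using Finset.strongInduction with
  | H U ih =>
  intro A hA hne
  rcases U.eq_empty_or_nonempty with rfl | hU
  · have : (permsIn A).card ≤ 1 := by
      refine card_le_one.2 fun σ hσ τ hτ => Equiv.ext fun i => ?_
      obtain ⟨c, hc, -⟩ := hA i (by simp)
      have h1 := mem_permsIn.1 hσ i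
      have h2 := mem_permsIn.1 hτ i
      rw [hc, mem_singleton] at h1 h2
      rw [h1, h2]
    rw [sum_empty]
    exact Real.log_nonpos (by positivity) (by exact_mod_cast this)
  set S := permsIn A with hS
  have hP : (0 : ℝ) < S.card := by exact_mod_cast hne.card_pos
  have hm : (0 : ℝ) < U.card := by exact_mod_cast hU.card_pos
  have hrow : ∀ i ∈ U, (S.card : ℝ) * Real.log S.card ≤ S.card * Real.log ((A i).card : ℝ) +
      ∑ σ ∈ S, Real.log ((permsIn (fixEntry A i (σ i))).card : ℝ) := by
    intro i _
    have hmaps : ∀ σ ∈ S, σ i ∈ A i := fun σ hσ => mem_permsIn.1 hσ i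
    have hsum : (S.card : ℝ) = ∑ c ∈ A i, ((permsIn (fixEntry A i c)).card : ℝ) := by
      rw [card_eq_sum_card_fiberwise hmaps]
      push_cast
      exact sum_congr rfl fun c hc => by rw [permsIn_fixEntry A i c hc]
    have hlog : ∑ c ∈ A i, ((permsIn (fixEntry A i c)).card : ℝ) *
          Real.log ((permsIn (fixEntry A i c)).card : ℝ) =
        ∑ σ ∈ S, Real.log ((permsIn (fixEntry A i (σ i))).card : ℝ) := by
      rw [← sum_fiberwise_of_maps_to hmaps]
      refine sum_congr rfl fun c hc => ?_
      rw [sum_congr rfl (g := fun _ => Real.log ((permsIn (fixEntry A i c)).card : ℝ))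
        (fun σ hσ => by rw [(mem_filter.1 hσ).2]), sum_const, nsmul_eq_mul,
        ← permsIn_fixEntry A i c hc]
    obtain ⟨σ, hσ⟩ := hne
    have := sum_mul_log_le (A i) ⟨σ i, hmaps σ hσ⟩
      (fun c => ((permsIn (fixEntry A i c)).card : ℝ)) (fun _ _ => by positivity) (by rwa [← hsum])
    rwa [← hsum, hlog] at this
  have hminor : ∀ σ ∈ S, ∀ i ∈ U, Real.log ((permsIn (fixEntry A i (σ i))).card : ℝ) ≤
      ∑ j ∈ U.erase i, logFactorialMean ((A j).erase (σ i)).card := by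
    intro σ hσ i hi
    have hσ' := mem_permsIn.1 hσ
    refine (ih (U.erase i) (erase_ssubset hi) (fixEntry A i (σ i)) ?_ ⟨σ, ?_⟩).trans_eq ?_
    · intro a ha
      by_cases hai : a = i
      · subst hai
        exact ⟨σ a, by simp [fixEntry], fun j hj => by simp [fixEntry, hj]⟩
      · obtain ⟨c, hc, hc'⟩ := hA a fun h => ha (mem_erase.2 ⟨hai, h⟩)
        have hac : σ a = c := by simpa [hc] using hσ' a
        have hci : c ≠ σ i := fun e => hai (σ.injective (hac.trans e))
        refine ⟨c, ?_, fun j hj => ?_⟩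
        · simp only [fixEntry, if_neg hai, hc]
          exact erase_eq_of_notMem (by simpa using hci.symm)
        · by_cases hji : j = i
          · simp [fixEntry, hji, hci]
          · simp [fixEntry, hji, hc' j hj]
    · rw [permsIn_fixEntry A i _ (hσ' i)]
      exact mem_filter.2 ⟨hσ, rfl⟩
    · exact sum_congr rfl fun j hj => by simp [fixEntry, (mem_erase.1 hj).1]
  have hperm : ∀ σ ∈ S, ∑ i ∈ U, Real.log ((permsIn (fixEntry A i (σ i))).card : ℝ) ≤
      ∑ j ∈ U, ((U.card : ℝ) * logFactorialMean (A j).card - Real.log ((A j).card : ℝ)) := by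
    intro σ hσ
    refine (sum_le_sum (hminor σ hσ)).trans_eq ?_
    rw [sum_comm' (t' := U) (s' := fun j => U.erase j)
      (by intro x y; simp only [mem_erase]; tauto)]
    exact sum_congr rfl fun j hj => sum_logFactorialMean_erase U A hA σ hσ j hj
  have htotal := sum_le_sum hrow
  rw [sum_add_distrib, sum_comm, sum_const, nsmul_eq_mul, ← mul_sum] at htotal
  have hall := sum_le_sum hperm
  rw [sum_const, nsmul_eq_mul, sum_sub_distrib, ← mul_sum] at hall
  have hfin : ((U.card : ℝ) * S.card) * Real.log S.card ≤
      ((U.card : ℝ) * S.card) * ∑ j ∈ U, logFactorialMean (A j).card := by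
    linarith
  exact le_of_mul_le_mul_left hfin (by positivity)

/-- A path-cycle has a first vertex `u`, from which `f` reaches exactly `s`, and a last vertex `v`
of the path, such that redirecting `v` to `u` turns `f` into a permutation. -/
theorem exists_path_endpoints {V : Type*} [Fintype V] [DecidableEq V] (s : Finset V) (f : V → V)
    (hne : s.Nonempty) (hoff : ∀ v, v ∉ s → f v = v) (hmaps : ∀ v ∈ s, f v ∈ s)
    (hconn : ∀ u ∈ s, ∀ v ∈ s,
      Relation.ReflTransGen (fun a b => (a ∈ s ∧ f a = b) ∨ (b ∈ s ∧ f b = a)) u v)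
    (hsrc : ∀ a ∈ s, ∀ b ∈ s, (∀ x ∈ s, f x ≠ a) → (∀ x ∈ s, f x ≠ b) → a = b) :
    ∃ u ∈ s, ∃ v ∈ s, (∀ y, y ∈ s ↔ ∃ m, f^[m] u = y) ∧
      Function.Bijective (Function.update f v u) := by
  obtain ⟨u, hu, hpre⟩ : ∃ u ∈ s, ∀ y ∈ s, y ≠ u → ∃ x ∈ s, f x = y := by
    by_cases h : ∃ a ∈ s, ∀ x ∈ s, f x ≠ a
    · obtain ⟨a, ha, hxa⟩ := h
      refine ⟨a, ha, fun y hy hya => ?_⟩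
      by_contra! hc
      exact hya (hsrc y hy a ha hc hxa)
    · push Not at h
      obtain ⟨a, ha⟩ := hne
      exact ⟨a, ha, fun y hy _ => h y hy⟩
  refine ⟨u, hu, ?_⟩
  have hcover : ∀ y ∈ s, ∃ m, f^[m] u = y := by
    set R := s.filter fun y => ¬ ∃ m, f^[m] u = y with hR
    have hsub : R ⊆ R.image f := by
      intro y hy
      obtain ⟨hys, hy'⟩ := mem_filter.1 hy
      obtain ⟨x, hx, rfl⟩ := hpre y hys fun e => hy' ⟨0, e.symm⟩
      refine mem_image_of_mem f (mem_filter.2 ⟨hx, ?_⟩)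
      rintro ⟨m, hm⟩
      exact hy' ⟨m + 1, by rw [Function.iterate_succ_apply', hm]⟩
    have himg : R.image f = R := (eq_of_subset_of_card_le hsub card_image_le).symm
    intro y hy
    induction hconn u hu y hy with
    | refl => exact ⟨0, rfl⟩
    | @tail b c _ hbc ih =>
      have hb : b ∈ s := by
        rcases hbc with ⟨hb, -⟩ | ⟨hc, rfl⟩
        · exact hb
        · exact hmaps c hc
      obtain ⟨m, hm⟩ := ih hb
      rcases hbc with ⟨-, rfl⟩ | ⟨hc, hcb⟩
      · exact ⟨m + 1, by rw [Function.iterate_succ_apply', hm]⟩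
      · by_contra hno
        have hcR : c ∈ R := mem_filter.2 ⟨hc, hno⟩
        have : b ∈ R := by
          rw [← himg, ← hcb]
          exact mem_image_of_mem f hcR
        exact (mem_filter.1 this).2 ⟨m, hm⟩
  choose! g hg hfg using hpre
  obtain ⟨v, hv, hvg⟩ : ∃ v ∈ s, v ∉ (s.erase u).image g := by
    by_contra! hc
    have h1 := card_le_card (show s ⊆ (s.erase u).image g from hc)
    have h2 := (card_image_le (s := s.erase u) (f := g)).trans_lt (card_erase_lt_of_mem hu)
    omega
  refine ⟨v, hv, fun y => ⟨hcover y, ?_⟩, Finite.surjective_iff_bijective.1 fun y => ?_⟩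
  · rintro ⟨m, rfl⟩
    induction m with
    | zero => exact hu
    | succ m ih => rw [Function.iterate_succ_apply']; exact hmaps _ ih
  · by_cases hys : y ∈ s
    · by_cases hyu : y = u
      · exact ⟨v, by simp [hyu]⟩
      · refine ⟨g y, ?_⟩
        rw [Function.update_of_ne, hfg y hys hyu]
        rintro rfl
        exact hvg (mem_image_of_mem g (mem_erase.2 ⟨hyu, hys⟩))
    · refine ⟨y, ?_⟩
      rw [Function.update_of_ne, hoff y hys]
      rintro rfl
      exact hys hv

/-- The rows such that every path from `u` to `v` in `G`, closed up by the edge `(v, u)` and completed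
by self-loops off the path, is a permutation in `permsIn (pathRows G u v)`. -/
noncomputable def pathRows {V : Type*} [Fintype V] (G : V → V → ℕ) (u v : V) : V → Finset V :=
  fun i => if i = v then {u} else insert i (univ.filter fun j => G i j ≠ 0)

theorem pathCycleCount_le_sum {V : Type*} [Fintype V] (G : V → V → ℕ)
    (hsimple : ∀ u v, G u v ≤ 1) :
    pathCycleCount G ≤ ∑ p : V × V,
      (univ.filter fun j => G p.2 j ≠ 0).card * (permsIn (pathRows G p.1 p.2)).card := by
  let C : Finset (Finset V × (V → V)) := univ.filter fun q =>
    (q.1.Nonempty ∧ (∀ v, v ∉ q.1 → q.2 v = v) ∧ (∀ v ∈ q.1, q.2 v ∈ q.1) ∧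
      (∀ u ∈ q.1, ∀ v ∈ q.1,
        Relation.ReflTransGen
          (fun a b => (a ∈ q.1 ∧ q.2 a = b) ∨ (b ∈ q.1 ∧ q.2 b = a)) u v) ∧
      (q.1.filter fun v => ∀ u ∈ q.1, q.2 u ≠ v).card ≤ 1) ∧ ∀ v ∈ q.1, G v (q.2 v) ≠ 0
  let T : Finset (Σ _ : V × V, V × Equiv.Perm V) := univ.sigma fun p =>
    (univ.filter fun j => G p.2 j ≠ 0) ×ˢ permsIn (pathRows G p.1 p.2)
  let Φ : (Σ _ : V × V, V × Equiv.Perm V) → Finset V × (V → V) := fun t =>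
    (univ.filter fun y => ∃ m, (Function.update (⇑t.2.2) t.1.2 t.2.1)^[m] t.1.1 = y,
      Function.update (⇑t.2.2) t.1.2 t.2.1)
  have hcount : pathCycleCount G ≤ C.card := by
    rw [pathCycleCount, ← Fintype.sum_prod_type', card_filter]
    refine sum_le_sum fun q _ => ?_
    split_ifs with h1 h2 h2
    · exact prod_le_one' fun v _ => hsimple _ _
    · have : ∃ v ∈ q.1, G v (q.2 v) = 0 := by
        by_contra! h
        exact h2 ⟨by convert h1, h⟩
      obtain ⟨v, hv, h0⟩ := this
      exact (prod_eq_zero hv h0).le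
    · exact Nat.zero_le _
    · exact le_rfl
  have hsub : C ⊆ T.image Φ := by
    rintro ⟨s, f⟩ hq
    obtain ⟨⟨hne, hoff, hmaps, hconn, hsrc⟩, hG⟩ := (mem_filter.1 hq).2
    obtain ⟨u, hu, v, hv, hs, hbij⟩ := exists_path_endpoints s f hne hoff hmaps hconn
      fun a ha b hb hxa hxb =>
        card_le_one.1 hsrc a (mem_filter.2 ⟨ha, hxa⟩) b (mem_filter.2 ⟨hb, hxb⟩)
    have hf : Function.update (⇑(Equiv.ofBijective _ hbij)) v (f v) = f := by
      simp
    refine mem_image.2 ⟨⟨(u, v), (f v, Equiv.ofBijective _ hbij)⟩, ?_, ?_⟩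
    · refine mem_sigma.2 ⟨mem_univ _, mem_product.2 ⟨by simpa using hG v hv, ?_⟩⟩
      refine mem_permsIn.2 fun i => ?_
      by_cases hi : i = v
      · simp [pathRows, hi]
      · by_cases his : i ∈ s
        · have := hG i his
          simp only at this
          simp [pathRows, hi, this]
        · simp [pathRows, hi, show f i = i from hoff i his]
    · simp only [Φ, hf, Prod.mk.injEq, and_true]
      ext y
      simp [hs]
  calc pathCycleCount G ≤ C.card := hcount
    _ ≤ T.card := (card_le_card hsub).trans card_image_le
    _ = _ := by simp only [T, card_sigma, card_product]

theorem card_outNeighbors_le {V : Type*} [Fintype V] (G : V → V → ℕ) (k : ℕ) (v : V)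
    (hdeg : ∑ u, G v u ≤ k) : (univ.filter fun j => G v j ≠ 0).card ≤ k := by
  refine le_trans ?_ hdeg
  rw [card_filter]
  exact sum_le_sum fun j _ => by split_ifs <;> omega

theorem card_permsIn_pathRows_le {V : Type*} [Fintype V] (G : V → V → ℕ) (k : ℕ)
    (hdeg : ∀ v, ∑ u, G v u ≤ k) (u v : V) :
    ((permsIn (pathRows G u v)).card : ℝ) ≤
      (Nat.factorial (k + 1) : ℝ) ^ (((Fintype.card V : ℝ) - 1) / ((k : ℝ) + 1)) := by
  have hfac : (0 : ℝ) < (Nat.factorial (k + 1) : ℝ) := by positivity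
  rcases (permsIn (pathRows G u v)).eq_empty_or_nonempty with h | h
  · rw [h, card_empty, Nat.cast_zero]
    positivity
  · have hpos : (0 : ℝ) < ((permsIn (pathRows G u v)).card : ℝ) := by
      exact_mod_cast h.card_pos
    rw [← Real.log_le_log_iff hpos (Real.rpow_pos_of_pos hfac _), Real.log_rpow hfac]
    refine (log_card_permsIn_le_sum univ _ (fun i hi => absurd (mem_univ i) hi) h).trans ?_
    rw [← add_sum_erase _ _ (mem_univ v)]
    have hv : logFactorialMean (pathRows G u v v).card = 0 := by
      simp [pathRows, logFactorialMean_one]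
    have hrow : ∀ i ∈ univ.erase v,
        logFactorialMean (pathRows G u v i).card ≤ logFactorialMean (k + 1) := by
      intro i hi
      refine logFactorialMean_mono ?_
      simp only [pathRows, if_neg (mem_erase.1 hi).1]
      exact (card_insert_le _ _).trans (Nat.succ_le_succ (card_outNeighbors_le G k i (hdeg i)))
    have hsum := sum_le_card_nsmul _ _ _ hrow
    have hV : 1 ≤ Fintype.card V := Fintype.card_pos_iff.2 ⟨v⟩
    rw [card_erase_of_mem (mem_univ v), card_univ, nsmul_eq_mul, Nat.cast_sub hV] at hsum
    rw [hv, zero_add]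
    refine hsum.trans_eq ?_
    rw [logFactorialMean]
    push_cast
    ring

theorem stmt_7 (n k : ℕ) (hn : 1 ≤ n) (hk : 2 ≤ k) (G : Fin n → Fin n → ℕ)
    (hsimple : ∀ u v : Fin n, G u v ≤ 1)
    (hdeg : ∀ v : Fin n, (∑ u, G v u) ≤ k) :
    (pathCycleCount G : ℝ) ≤
      (n : ℝ) ^ 2 * (k : ℝ) *
        (Nat.factorial (k + 1) : ℝ) ^ (((n : ℝ) - 1) / ((k : ℝ) + 1)) := by
  set B := (Nat.factorial (k + 1) : ℝ) ^ (((n : ℝ) - 1) / ((k : ℝ) + 1)) with hB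
  have hcount : (pathCycleCount G : ℝ) ≤ ∑ p : Fin n × Fin n,
      ((univ.filter fun j => G p.2 j ≠ 0).card : ℝ) *
        ((permsIn (pathRows G p.1 p.2)).card : ℝ) := by
    have h := pathCycleCount_le_sum G hsimple
    refine le_trans (Nat.cast_le.2 (by convert h)) (le_of_eq ?_)
    push_cast
    exact sum_congr rfl fun p _ => by congr!
  have hterm : ∀ p ∈ (univ : Finset (Fin n × Fin n)),
      ((univ.filter fun j => G p.2 j ≠ 0).card : ℝ) *
        ((permsIn (pathRows G p.1 p.2)).card : ℝ) ≤ k * B := by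
    intro p _
    have h1 := card_outNeighbors_le G k p.2 (hdeg p.2)
    have h2 := card_permsIn_pathRows_le G k hdeg p.1 p.2
    rw [Fintype.card_fin] at h2
    refine mul_le_mul ?_ h2 (by positivity) (by positivity)
    exact Nat.cast_le.2 (by convert h1)
  refine (hcount.trans (sum_le_card_nsmul _ _ _ hterm)).trans_eq ?_
  rw [card_univ, Fintype.card_prod, Fintype.card_fin, nsmul_eq_mul]
  push_cast
  ring
end

section
/- For all integers n ≥ 1 and k ≥ 2, every digraph G with n vertices, every vertex of outdegree exactly k, and every multi-edge between distinct vertices of multiplicity at most k−1 satisfies C'(G) ≤ 5·n²·k·α(k)^(n−1), where C'(G) is the number of path-cycle subgraphs of G and α(k) = (k − 1 + √((k−1)² + 4))/2. -/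
open scoped Classical
open Finset

section PathSums

variable {V : Type*} [Fintype V] [DecidableEq V]

/-- Weighted number of simple paths from `u` to the sink `v` all of whose vertices other than `v`
lie in `S`. -/
noncomputable def pathSum (W : V → V → ℝ) (v : V) (S : Finset V) (u : V) : ℝ :=
  if u = v then 1
  else if _h : u ∈ S then ∑ t, W u t * pathSum W v (S.erase u) t
  else 0
termination_by S.card
decreasing_by exact Finset.card_erase_lt_of_mem ‹_›

/-- Weighted number of simple paths from `u` to `v` in `S` that traverse an edge `(x, t)`, the
weight of that edge being left out. -/
noncomputable def pathSumVia (W : V → V → ℝ) (v x t : V) (S : Finset V) (u : V) : ℝ :=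
  if u = v then 0
  else if _h : u ∈ S then
    if u = x then pathSum W v (S.erase u) t
    else ∑ s, W u s * pathSumVia W v x t (S.erase u) s
  else 0
termination_by S.card
decreasing_by exact Finset.card_erase_lt_of_mem ‹_›

lemma pathSum_self (W : V → V → ℝ) (v : V) (S : Finset V) : pathSum W v S v = 1 := by
  rw [pathSum, if_pos rfl]

lemma pathSum_of_notMem {W : V → V → ℝ} {v : V} {S : Finset V} {u : V} (huv : u ≠ v)
    (hu : u ∉ S) : pathSum W v S u = 0 := by
  rw [pathSum, if_neg huv, dif_neg hu]

lemma pathSum_of_mem {W : V → V → ℝ} {v : V} {S : Finset V} {u : V} (huv : u ≠ v) (hu : u ∈ S) :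
    pathSum W v S u = ∑ t, W u t * pathSum W v (S.erase u) t := by
  rw [pathSum, if_neg huv, dif_pos hu]

lemma pathSumVia_sink (W : V → V → ℝ) (v x t : V) (S : Finset V) :
    pathSumVia W v x t S v = 0 := by
  rw [pathSumVia, if_pos rfl]

lemma pathSumVia_of_notMem {W : V → V → ℝ} {v x t : V} {S : Finset V} {u : V} (hu : u ∉ S) :
    pathSumVia W v x t S u = 0 := by
  rw [pathSumVia, dif_neg hu, ite_self]

lemma pathSumVia_start {W : V → V → ℝ} {v x t : V} {S : Finset V} (hxv : x ≠ v) (hx : x ∈ S) :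
    pathSumVia W v x t S x = pathSum W v (S.erase x) t := by
  rw [pathSumVia, if_neg hxv, dif_pos hx, if_pos rfl]

lemma pathSumVia_of_mem {W : V → V → ℝ} {v x t : V} {S : Finset V} {u : V} (huv : u ≠ v)
    (hu : u ∈ S) (hux : u ≠ x) :
    pathSumVia W v x t S u = ∑ s, W u s * pathSumVia W v x t (S.erase u) s := by
  rw [pathSumVia, if_neg huv, dif_pos hu, if_neg hux]

lemma pathSum_nonneg {W : V → V → ℝ} (hW : ∀ a b, 0 ≤ W a b) (v : V) (S : Finset V) (u : V) :
    0 ≤ pathSum W v S u := by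
  induction S using Finset.strongInduction generalizing u with
  | H S ih =>
    by_cases huv : u = v
    · rw [huv, pathSum_self]; exact zero_le_one
    by_cases hu : u ∈ S
    · rw [pathSum_of_mem huv hu]
      exact Finset.sum_nonneg fun t _ =>
        mul_nonneg (hW _ _) (ih _ (Finset.erase_ssubset hu) _)
    · rw [pathSum_of_notMem huv hu]

lemma pathSumVia_nonneg {W : V → V → ℝ} (hW : ∀ a b, 0 ≤ W a b) (v x t : V) (S : Finset V)
    (u : V) : 0 ≤ pathSumVia W v x t S u := by
  induction S using Finset.strongInduction generalizing u with
  | H S ih =>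
    by_cases huv : u = v
    · rw [huv, pathSumVia_sink]
    by_cases hu : u ∈ S
    · by_cases hux : u = x
      · subst hux
        rw [pathSumVia_start huv hu]
        exact pathSum_nonneg hW _ _ _
      · rw [pathSumVia_of_mem huv hu hux]
        exact Finset.sum_nonneg fun t _ =>
          mul_nonneg (hW _ _) (ih _ (Finset.erase_ssubset hu) _)
    · rw [pathSumVia_of_notMem hu]

lemma pathSum_congr {W W' : V → V → ℝ} (v : V) (S : Finset V) (u : V)
    (h : ∀ r ∈ S, W r = W' r) : pathSum W v S u = pathSum W' v S u := by
  induction S using Finset.strongInduction generalizing u with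
  | H S ih =>
    by_cases huv : u = v
    · rw [huv, pathSum_self, pathSum_self]
    by_cases hu : u ∈ S
    · rw [pathSum_of_mem huv hu, pathSum_of_mem huv hu, h u hu]
      exact Finset.sum_congr rfl fun t _ => by
        rw [ih _ (Finset.erase_ssubset hu) t fun r hr => h r (Finset.mem_of_mem_erase hr)]
    · rw [pathSum_of_notMem huv hu, pathSum_of_notMem huv hu]

lemma pathSumVia_congr {W W' : V → V → ℝ} (v x t : V) (S : Finset V) (u : V)
    (h : ∀ r ∈ S, r ≠ x → W r = W' r) :
    pathSumVia W v x t S u = pathSumVia W' v x t S u := by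
  induction S using Finset.strongInduction generalizing u with
  | H S ih =>
    by_cases huv : u = v
    · rw [huv, pathSumVia_sink, pathSumVia_sink]
    by_cases hu : u ∈ S
    · by_cases hux : u = x
      · subst hux
        rw [pathSumVia_start huv hu, pathSumVia_start huv hu]
        exact pathSum_congr _ _ _ fun r hr =>
          h r (Finset.mem_of_mem_erase hr) (Finset.ne_of_mem_erase hr)
      · rw [pathSumVia_of_mem huv hu hux, pathSumVia_of_mem huv hu hux, h u hu hux]
        exact Finset.sum_congr rfl fun t _ => by
          rw [ih _ (Finset.erase_ssubset hu) t fun r hr => h r (Finset.mem_of_mem_erase hr)]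
    · rw [pathSumVia_of_notMem hu, pathSumVia_of_notMem hu]

/-- Paths either avoid `x` or traverse exactly one edge out of `x`. -/
lemma pathSum_eq_avoid_add_via (W : V → V → ℝ) {v x : V} (hxv : x ≠ v) (S : Finset V) (u : V) :
    pathSum W v S u = pathSum W v (S.erase x) u + ∑ t, W x t * pathSumVia W v x t S u := by
  induction S using Finset.strongInduction generalizing u with
  | H S ih =>
    by_cases huv : u = v
    · subst huv
      simp [pathSum_self, pathSumVia_sink]
    by_cases hu : u ∈ S
    · by_cases hux : u = x
      · subst hux
        rw [pathSum_of_notMem huv (Finset.notMem_erase _ _), pathSum_of_mem huv hu, zero_add]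
        exact Finset.sum_congr rfl fun t _ => by rw [pathSumVia_start huv hu]
      · rw [pathSum_of_mem huv hu, pathSum_of_mem huv (Finset.mem_erase.2 ⟨hux, hu⟩)]
        simp_rw [pathSumVia_of_mem huv hu hux, Finset.mul_sum]
        rw [Finset.sum_comm, ← Finset.sum_add_distrib]
        refine Finset.sum_congr rfl fun s _ => ?_
        rw [ih _ (Finset.erase_ssubset hu) s, Finset.erase_right_comm, mul_add, Finset.mul_sum]
        congr 1
        exact Finset.sum_congr rfl fun t _ => by ring
    · rw [pathSum_of_notMem huv hu,
        pathSum_of_notMem huv (fun h => hu (Finset.mem_of_mem_erase h))]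
      simp [pathSumVia_of_notMem hu]

lemma pathSumVia_target_notMem (W : V → V → ℝ) {v x t : V} {S : Finset V} (u : V) (htv : t ≠ v)
    (ht : t ∉ S) : pathSumVia W v x t S u = 0 := by
  induction S using Finset.strongInduction generalizing u with
  | H S ih =>
    by_cases huv : u = v
    · rw [huv, pathSumVia_sink]
    by_cases hu : u ∈ S
    · by_cases hux : u = x
      · subst hux
        rw [pathSumVia_start huv hu,
          pathSum_of_notMem htv (fun h => ht (Finset.mem_of_mem_erase h))]
      · rw [pathSumVia_of_mem huv hu hux]
        exact Finset.sum_eq_zero fun s _ => by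
          rw [ih _ (Finset.erase_ssubset hu) s (fun h => ht (Finset.mem_of_mem_erase h)), mul_zero]
    · rw [pathSumVia_of_notMem hu]

lemma pathSumVia_target_start (W : V → V → ℝ) (v x t : V) (S : Finset V) :
    pathSumVia W v x t S t = 0 := by
  by_cases htv : t = v
  · rw [htv, pathSumVia_sink]
  by_cases ht : t ∈ S
  · by_cases htx : t = x
    · subst htx
      rw [pathSumVia_start htv ht, pathSum_of_notMem htv (Finset.notMem_erase _ _)]
    · rw [pathSumVia_of_mem htv ht htx]
      exact Finset.sum_eq_zero fun s _ => by
        rw [pathSumVia_target_notMem W s htv (Finset.notMem_erase _ _), mul_zero]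
  · rw [pathSumVia_of_notMem ht]

lemma pathSumVia_target_self (W : V → V → ℝ) {v x : V} (hxv : x ≠ v) (S : Finset V) (u : V) :
    pathSumVia W v x x S u = 0 := by
  induction S using Finset.strongInduction generalizing u with
  | H S ih =>
    by_cases huv : u = v
    · rw [huv, pathSumVia_sink]
    by_cases hu : u ∈ S
    · by_cases hux : u = x
      · subst hux
        rw [pathSumVia_target_start]
      · rw [pathSumVia_of_mem huv hu hux]
        exact Finset.sum_eq_zero fun s _ => by rw [ih _ (Finset.erase_ssubset hu) s, mul_zero]
    · rw [pathSumVia_of_notMem hu]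

/-- A path through the edge `(x, t)` leaves `t` through one of the edges of `t`. -/
lemma pathSumVia_eq_sum (W : V → V → ℝ) {v x t : V} {S : Finset V} (u : V) (htx : t ≠ x)
    (htv : t ≠ v) (ht : t ∈ S) :
    pathSumVia W v x t S u = ∑ s, W t s * pathSumVia W v x s (S.erase t) u := by
  induction S using Finset.strongInduction generalizing u with
  | H S ih =>
    by_cases huv : u = v
    · subst huv
      simp [pathSumVia_sink]
    by_cases hut : u = t
    · subst hut
      rw [pathSumVia_target_start]
      simp [pathSumVia_of_notMem]
    by_cases hu : u ∈ S
    · by_cases hux : u = x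
      · subst hux
        rw [pathSumVia_start huv hu, pathSum_of_mem htv (Finset.mem_erase.2 ⟨htx, ht⟩)]
        exact Finset.sum_congr rfl fun s _ => by
          rw [pathSumVia_start huv (Finset.mem_erase.2 ⟨hut, hu⟩), Finset.erase_right_comm]
      · rw [pathSumVia_of_mem huv hu hux]
        simp_rw [pathSumVia_of_mem huv (Finset.mem_erase.2 ⟨hut, hu⟩) hux, Finset.mul_sum]
        rw [Finset.sum_comm]
        refine Finset.sum_congr rfl fun r _ => ?_
        rw [ih _ (Finset.erase_ssubset hu) r (Finset.mem_erase.2 ⟨Ne.symm hut, ht⟩),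
          Finset.mul_sum, Finset.erase_right_comm]
        exact Finset.sum_congr rfl fun s _ => by ring
    · rw [pathSumVia_of_notMem hu]
      simp [pathSumVia_of_notMem (fun h => hu (Finset.mem_of_mem_erase h))]

lemma pathSumVia_target_sink (W : V → V → ℝ) {v x : V} {S : Finset V} (u : V) (hxv : x ≠ v)
    (hv : v ∉ S) (hx : x ∈ S) : pathSumVia W v x v S u = pathSum W x (S.erase x) u := by
  induction S using Finset.strongInduction generalizing u with
  | H S ih =>
    by_cases huv : u = v
    · subst huv
      rw [pathSumVia_sink, pathSum_of_notMem (Ne.symm hxv) (fun h => hv (Finset.mem_of_mem_erase h))]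
    by_cases hu : u ∈ S
    · by_cases hux : u = x
      · subst hux
        rw [pathSumVia_start huv hu, pathSum_self, pathSum_self]
      · rw [pathSumVia_of_mem huv hu hux, pathSum_of_mem hux (Finset.mem_erase.2 ⟨hux, hu⟩)]
        refine Finset.sum_congr rfl fun r _ => ?_
        rw [ih _ (Finset.erase_ssubset hu) r (fun h => hv (Finset.mem_of_mem_erase h))
          (Finset.mem_erase.2 ⟨Ne.symm hux, hx⟩), Finset.erase_right_comm]
    · have hux : u ≠ x := fun h => hu (h ▸ hx)
      rw [pathSumVia_of_notMem hu,
        pathSum_of_notMem hux (fun h => hu (Finset.mem_of_mem_erase h))]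

/-- Decomposition of paths according to the last edge. -/
lemma pathSum_eq_sum_last (W : V → V → ℝ) {v : V} {S : Finset V} {u : V} (huv : u ≠ v)
    (hv : v ∉ S) : pathSum W v S u = ∑ r ∈ S, W r v * pathSum W r (S.erase r) u := by
  induction S using Finset.strongInduction generalizing u with
  | H S ih =>
    by_cases hu : u ∈ S
    · rw [← Finset.add_sum_erase S _ hu, pathSum_self, pathSum_of_mem huv hu,
        ← Finset.add_sum_erase Finset.univ _ (Finset.mem_univ v), pathSum_self]
      congr 1
      have h1 : ∀ r ∈ S.erase u, W r v * pathSum W r (S.erase r) u =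
          ∑ t ∈ Finset.univ.erase v, W r v * (W u t * pathSum W r ((S.erase u).erase r) t) := by
        intro r hr
        obtain ⟨hru, hr⟩ := Finset.mem_erase.1 hr
        rw [pathSum_of_mem (Ne.symm hru) (Finset.mem_erase.2 ⟨Ne.symm hru, hu⟩),
          ← Finset.add_sum_erase Finset.univ _ (Finset.mem_univ v),
          pathSum_of_notMem (ne_of_mem_of_not_mem hr hv).symm
            (fun h => hv (Finset.mem_of_mem_erase (Finset.mem_of_mem_erase h))), mul_zero,
          zero_add, Finset.mul_sum, Finset.erase_right_comm]
      rw [Finset.sum_congr rfl h1, Finset.sum_comm]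
      refine Finset.sum_congr rfl fun t ht => ?_
      rw [ih _ (Finset.erase_ssubset hu) (Finset.ne_of_mem_erase ht)
        (fun h => hv (Finset.mem_of_mem_erase h)), Finset.mul_sum]
      exact Finset.sum_congr rfl fun r _ => by ring
    · rw [pathSum_of_notMem huv hu]
      refine (Finset.sum_eq_zero fun r hr => ?_).symm
      rw [pathSum_of_notMem (ne_of_mem_of_not_mem hr hu).symm (fun h => hu (Finset.mem_of_mem_erase h)),
        mul_zero]

/-- A vertex without incoming edges may be deleted. -/
lemma pathSum_erase_of_no_in {W : V → V → ℝ} {v p : V} {S : Finset V} {u : V}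
    (hup : u ≠ p) (h : ∀ r ∈ S, r ≠ p → W r p = 0) :
    pathSum W v S u = pathSum W v (S.erase p) u := by
  induction S using Finset.strongInduction generalizing u with
  | H S ih =>
    by_cases huv : u = v
    · rw [huv, pathSum_self, pathSum_self]
    by_cases hu : u ∈ S
    · rw [pathSum_of_mem huv hu, pathSum_of_mem huv (Finset.mem_erase.2 ⟨hup, hu⟩)]
      refine Finset.sum_congr rfl fun t _ => ?_
      by_cases htp : t = p
      · rw [htp, h u hu hup, zero_mul, zero_mul]
      · rw [ih _ (Finset.erase_ssubset hu) htp fun r hr => h r (Finset.mem_of_mem_erase hr),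
          Finset.erase_right_comm]
    · rw [pathSum_of_notMem huv hu,
        pathSum_of_notMem huv (fun h => hu (Finset.mem_of_mem_erase h))]

lemma pathSumVia_erase_of_no_in {W : V → V → ℝ} {v x t p : V} {S : Finset V} {u : V}
    (hup : u ≠ p) (htp : t ≠ p) (h : ∀ r ∈ S, r ≠ x → r ≠ p → W r p = 0) :
    pathSumVia W v x t S u = pathSumVia W v x t (S.erase p) u := by
  induction S using Finset.strongInduction generalizing u with
  | H S ih =>
    by_cases huv : u = v
    · rw [huv, pathSumVia_sink, pathSumVia_sink]
    by_cases hu : u ∈ S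
    · by_cases hux : u = x
      · subst hux
        rw [pathSumVia_start huv hu, pathSumVia_start huv (Finset.mem_erase.2 ⟨hup, hu⟩),
          Finset.erase_right_comm]
        exact pathSum_erase_of_no_in htp fun r hr =>
          h r (Finset.mem_of_mem_erase hr) (Finset.ne_of_mem_erase hr)
      · rw [pathSumVia_of_mem huv hu hux,
          pathSumVia_of_mem huv (Finset.mem_erase.2 ⟨hup, hu⟩) hux]
        refine Finset.sum_congr rfl fun s _ => ?_
        by_cases hsp : s = p
        · rw [hsp, h u hu hux hup, zero_mul, zero_mul]
        · rw [ih _ (Finset.erase_ssubset hu) hsp fun r hr => h r (Finset.mem_of_mem_erase hr),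
            Finset.erase_right_comm]
    · rw [pathSumVia_of_notMem hu,
        pathSumVia_of_notMem (fun h => hu (Finset.mem_of_mem_erase h))]

lemma pathSum_eq_zero_of_no_in {W : V → V → ℝ} {v : V} {S : Finset V} {u : V} (huv : u ≠ v)
    (hv : v ∉ S) (h : ∀ r ∈ S, W r v = 0) : pathSum W v S u = 0 := by
  rw [pathSum_eq_sum_last W huv hv]
  exact Finset.sum_eq_zero fun r hr => by rw [h r hr, zero_mul]

/-- Contracting the edge `(x, t)` into a vertex `t` that is not the sink. -/
lemma pathSum_contract (W : V → V → ℝ) {v x t : V} {S : Finset V} (u : V) (hxv : x ≠ v)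
    (htx : t ≠ x) (htv : t ≠ v) (ht : t ∈ S) :
    pathSum (Function.update W x (W t)) v (S.erase t) u =
      pathSum W v ((S.erase x).erase t) u + pathSumVia W v x t S u := by
  rw [pathSum_eq_avoid_add_via _ hxv, pathSumVia_eq_sum W u htx htv ht, Function.update_self,
    Finset.erase_right_comm]
  congr 1
  · exact pathSum_congr _ _ _ fun r hr => Function.update_of_ne
      (Finset.ne_of_mem_erase (Finset.mem_of_mem_erase hr)) _ _
  · refine Finset.sum_congr rfl fun s _ => ?_
    rw [pathSumVia_congr v x s (S.erase t) u fun r _ hr => Function.update_of_ne hr _ _]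

end PathSums

section TwoEdgeRows

variable {V : Type*} [DecidableEq V]

/-- The weight of the heavy (`true`) or light (`false`) edge leaving a vertex. -/
def edgeWeight (h : ℝ) (ε : Bool) : ℝ := cond ε h 1

/-- Weight function of the digraph in which every vertex `r` has a heavy edge to `E r true` and a
light edge to `E r false`. -/
def twoEdgeWeight (h : ℝ) (E : V → Bool → V) (r t : V) : ℝ :=
  ∑ ε, if E r ε = t then edgeWeight h ε else 0

/-- The edge `ε` out of `r` is a loop, or enters the start `u`, or leaves `insert v S`; no path
from `u` to `v` in `S` can use it. -/
def IsUseless (E : V → Bool → V) (v : V) (S : Finset V) (u r : V) (ε : Bool) : Prop :=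
  E r ε = r ∨ E r ε = u ∨ E r ε ∉ insert v S

/-- Vertices of `S` other than `p` with an edge to `p`. -/
def inNeighbors (E : V → Bool → V) (S : Finset V) (p : V) : Finset V :=
  S.filter fun r => r ≠ p ∧ ∃ ε, E r ε = p

/-- The sink lies outside `S`, and the two edges leaving a vertex of `S` have distinct targets. -/
def Admissible (E : V → Bool → V) (v : V) (S : Finset V) : Prop :=
  v ∉ S ∧ ∀ r ∈ S, ∀ ε, E r ε ≠ E r (!ε)

lemma edgeWeight_nonneg {h : ℝ} (hh : 0 ≤ h) (ε : Bool) : 0 ≤ edgeWeight h ε := by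
  cases ε <;> simp [edgeWeight, hh]

lemma one_le_edgeWeight {h : ℝ} (hh : 1 ≤ h) (ε : Bool) : 1 ≤ edgeWeight h ε := by
  cases ε <;> simp [edgeWeight, hh]

lemma edgeWeight_le {h : ℝ} (hh : 1 ≤ h) (ε : Bool) : edgeWeight h ε ≤ h := by
  cases ε <;> simp [edgeWeight, hh]

lemma twoEdgeWeight_nonneg {h : ℝ} (hh : 0 ≤ h) (E : V → Bool → V) (r t : V) :
    0 ≤ twoEdgeWeight h E r t :=
  Finset.sum_nonneg fun ε _ => by
    split_ifs
    · exact edgeWeight_nonneg hh ε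
    · exact le_rfl

lemma twoEdgeWeight_eq_zero (h : ℝ) {E : V → Bool → V} {r t : V} (hr : ∀ ε, E r ε ≠ t) :
    twoEdgeWeight h E r t = 0 :=
  Finset.sum_eq_zero fun ε _ => if_neg (hr ε)

lemma twoEdgeWeight_apply (h : ℝ) {E : V → Bool → V} {r : V} {ε : Bool}
    (hr : E r ε ≠ E r (!ε)) : twoEdgeWeight h E r (E r ε) = edgeWeight h ε := by
  cases ε <;> simp_all [twoEdgeWeight, Ne.symm]

lemma twoEdgeWeight_update (h : ℝ) (E : V → Bool → V) (x : V) (ρ : Bool → V) :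
    twoEdgeWeight h (Function.update E x ρ) = Function.update (twoEdgeWeight h E) x
      fun t => ∑ ε, if ρ ε = t then edgeWeight h ε else 0 := by
  ext r t
  by_cases hr : r = x
  · subst hr; simp [twoEdgeWeight]
  · simp [twoEdgeWeight, hr]

lemma Admissible.erase {E : V → Bool → V} {v : V} {S : Finset V} (hE : Admissible E v S) (p : V) :
    Admissible E v (S.erase p) :=
  ⟨fun h => hE.1 (Finset.mem_of_mem_erase h), fun r hr => hE.2 r (Finset.mem_of_mem_erase hr)⟩

lemma Admissible.erase_self {E : V → Bool → V} {v : V} {S : Finset V} (hE : Admissible E v S)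
    (x : V) : Admissible E x (S.erase x) :=
  ⟨Finset.notMem_erase _ _, fun r hr => hE.2 r (Finset.mem_of_mem_erase hr)⟩

lemma Admissible.update {E : V → Bool → V} {v : V} {S : Finset V} (hE : Admissible E v S) (x : V)
    {ρ : Bool → V} (hρ : ∀ ε, ρ ε ≠ ρ (!ε)) : Admissible (Function.update E x ρ) v S := by
  refine ⟨hE.1, fun r hr ε => ?_⟩
  by_cases hrx : r = x
  · subst hrx; simpa using hρ ε
  · simpa [hrx] using hE.2 r hr ε

lemma not_isUseless_iff {E : V → Bool → V} {v : V} {S : Finset V} {u r : V} {ε : Bool} :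
    ¬ IsUseless E v S u r ε ↔ E r ε ≠ r ∧ E r ε ≠ u ∧ E r ε ∈ insert v S := by
  rw [IsUseless, not_or, not_or, not_not]

lemma IsUseless.erase {E : V → Bool → V} {v : V} {S : Finset V} {u r : V} {ε : Bool}
    (hr : IsUseless E v S u r ε) (p : V) : IsUseless E v (S.erase p) u r ε := by
  rcases hr with hr | hr | hr
  · exact .inl hr
  · exact .inr (.inl hr)
  · refine .inr (.inr fun h => hr ?_)
    exact Finset.insert_subset_insert _ (Finset.erase_subset _ _) h

lemma mem_inNeighbors {E : V → Bool → V} {S : Finset V} {p r : V} :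
    r ∈ inNeighbors E S p ↔ r ∈ S ∧ r ≠ p ∧ ∃ ε, E r ε = p := Finset.mem_filter

/-- Either some possible target has at most one in-neighbor, or no edge is useless and the sink
has exactly two in-neighbors. -/
lemma exists_inNeighbors_card_le_one (E : V → Bool → V) {v : V} {S : Finset V} {u : V}
    (hv : v ∉ S) (hu : u ∈ S) :
    (∃ p ∈ insert v (S.erase u), (inNeighbors E S p).card ≤ 1) ∨
      ((∀ r ∈ S, ∀ ε, ¬ IsUseless E v S u r ε) ∧ (inNeighbors E S v).card = 2) := by
  by_contra! hcon
  obtain ⟨hlow, hcon⟩ := hcon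
  set T := insert v (S.erase u) with hT
  have hTcard : T.card = S.card := by
    rw [hT, Finset.card_insert_of_notMem fun h => hv (Finset.mem_of_mem_erase h),
      Finset.card_erase_of_mem hu, Nat.sub_add_cancel (Finset.card_pos.2 ⟨u, hu⟩)]
  have hdouble : ∑ p ∈ T, (inNeighbors E S p).card =
      ∑ r ∈ S, (T.filter fun p => r ≠ p ∧ ∃ ε, E r ε = p).card :=
    (Finset.sum_card_bipartiteAbove_eq_sum_card_bipartiteBelow
      (fun r p => r ≠ p ∧ ∃ ε, E r ε = p)).symm
  have hout : ∀ r ∈ S, (T.filter fun p => r ≠ p ∧ ∃ ε, E r ε = p).card ≤ 2 := by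
    intro r _
    refine (Finset.card_le_card (t := Finset.univ.image (E r)) fun p hp => ?_).trans
      (Finset.card_image_le.trans (by simp))
    obtain ⟨-, -, ε, hε⟩ := Finset.mem_filter.1 hp
    exact Finset.mem_image.2 ⟨ε, Finset.mem_univ _, hε⟩
  have hge : 2 * S.card ≤ ∑ p ∈ T, (inNeighbors E S p).card := by
    rw [← hTcard, mul_comm, ← smul_eq_mul]
    exact Finset.card_nsmul_le_sum _ _ _ fun p hp => hlow p hp
  by_cases huse : ∀ r ∈ S, ∀ ε, ¬ IsUseless E v S u r ε
  · have hlt : ∑ p ∈ T, 2 < ∑ p ∈ T, (inNeighbors E S p).card :=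
      Finset.sum_lt_sum (fun p hp => hlow p hp) ⟨v, Finset.mem_insert_self _ _,
        lt_of_le_of_ne (hlow v (Finset.mem_insert_self _ _)) (Ne.symm (hcon huse))⟩
    have hle := Finset.sum_le_sum hout
    simp only [Finset.sum_const, smul_eq_mul] at hlt hle
    omega
  · push Not at huse
    obtain ⟨r, hr, ε, hε⟩ := huse
    have hone : (T.filter fun p => r ≠ p ∧ ∃ ε, E r ε = p).card ≤ 1 := by
      refine (Finset.card_le_card (t := {E r (!ε)}) fun p hp => ?_).trans (by simp)
      obtain ⟨hpT, hrp, ε', hε'⟩ := Finset.mem_filter.1 hp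
      by_cases hεε : ε' = ε
      · subst hεε
        exfalso
        rcases hε with h | h | h
        · exact hrp (h.symm.trans hε')
        · rw [← hε', h, hT] at hpT
          rcases Finset.mem_insert.1 hpT with h' | h'
          · exact hv (h' ▸ hu)
          · exact Finset.notMem_erase _ _ h'
        · exact h (hε' ▸ Finset.insert_subset_insert _ (Finset.erase_subset _ _) hpT)
      · rw [Finset.mem_singleton, ← hε', Bool.eq_not.2 hεε]
    have hlt : ∑ r ∈ S, (T.filter fun p => r ≠ p ∧ ∃ ε, E r ε = p).card < ∑ r ∈ S, 2 :=
      Finset.sum_lt_sum hout ⟨r, hr, Nat.lt_succ_of_le hone⟩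
    simp only [Finset.sum_const, smul_eq_mul] at hlt
    omega

variable [Fintype V]

lemma sum_twoEdgeWeight_mul (h : ℝ) (E : V → Bool → V) (r : V) (f : V → ℝ) (ε : Bool) :
    ∑ t, twoEdgeWeight h E r t * f t =
      edgeWeight h ε * f (E r ε) + edgeWeight h (!ε) * f (E r (!ε)) := by
  simp only [twoEdgeWeight, Fintype.sum_bool, add_mul, ite_mul, zero_mul, Finset.sum_add_distrib,
    Finset.sum_ite_eq, Finset.mem_univ, if_true]
  cases ε <;> simp [add_comm]

lemma pathSum_twoEdge (h : ℝ) (E : V → Bool → V) {v x : V} (hxv : x ≠ v) (S : Finset V) (u : V)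
    (ε : Bool) :
    pathSum (twoEdgeWeight h E) v S u = pathSum (twoEdgeWeight h E) v (S.erase x) u +
      (edgeWeight h ε * pathSumVia (twoEdgeWeight h E) v x (E x ε) S u +
        edgeWeight h (!ε) * pathSumVia (twoEdgeWeight h E) v x (E x (!ε)) S u) := by
  rw [pathSum_eq_avoid_add_via _ hxv, sum_twoEdgeWeight_mul h E x _ ε]

lemma IsUseless.pathSumVia_eq_zero {E : V → Bool → V} {v : V} {S : Finset V} {u r : V} {ε : Bool}
    (hr : IsUseless E v S u r ε) (W : V → V → ℝ) {x : V} (hxv : x ≠ v) (hrx : r = x ∨ r ∉ insert v S) :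
    pathSumVia W v x (E r ε) S u = 0 := by
  rcases hr with h | h | h
  · rw [h]
    rcases hrx with rfl | hrx
    · exact pathSumVia_target_self W hxv S u
    · rw [Finset.mem_insert, not_or] at hrx
      exact pathSumVia_target_notMem W u hrx.1 hrx.2
  · rw [h, pathSumVia_target_start]
  · rw [Finset.mem_insert, not_or] at h
    exact pathSumVia_target_notMem W u h.1 h.2

/-- The path sum after contracting the edge `(x, t)`: if `t` is the sink, `x` becomes the sink;
otherwise `t` is deleted and `x` inherits its edges. -/
noncomputable def contractSum (h : ℝ) (E : V → Bool → V) (v : V) (S : Finset V) (u x t : V) : ℝ :=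
  if t = v then pathSum (twoEdgeWeight h E) x (S.erase x) u
  else pathSum (twoEdgeWeight h (Function.update E x (E t))) v (S.erase t) u

lemma contractSum_of_ne (h : ℝ) (E : V → Bool → V) {v : V} {S : Finset V} (u : V) {x t : V}
    (hxv : x ≠ v) (htx : t ≠ x) (htv : t ≠ v) (ht : t ∈ S) :
    contractSum h E v S u x t = pathSum (twoEdgeWeight h E) v ((S.erase x).erase t) u +
      pathSumVia (twoEdgeWeight h E) v x t S u := by
  rw [contractSum, if_neg htv, twoEdgeWeight_update]
  exact pathSum_contract (twoEdgeWeight h E) u hxv htx htv ht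

lemma pathSumVia_le_contractSum {h : ℝ} (hh : 0 ≤ h) (E : V → Bool → V) {v : V} {S : Finset V}
    (u : V) {x t : V} (hv : v ∉ S) (hx : x ∈ S) (htx : t ≠ x) (ht : t ∈ insert v S) :
    pathSumVia (twoEdgeWeight h E) v x t S u ≤ contractSum h E v S u x t := by
  have hxv := ne_of_mem_of_not_mem hx hv
  by_cases htv : t = v
  · subst htv
    rw [contractSum, if_pos rfl, pathSumVia_target_sink _ u hxv hv hx]
  · rw [contractSum_of_ne h E u hxv htx htv (Finset.mem_of_mem_insert_of_ne ht htv)]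
    exact le_add_of_nonneg_left (pathSum_nonneg (twoEdgeWeight_nonneg hh E) _ _ _)

/-- If `x` is the only in-neighbor of `t`, paths avoiding `x` survive the contraction. -/
lemma avoid_add_via_eq_contractSum (h : ℝ) {E : V → Bool → V} {v : V} {S : Finset V}
    {u x t : V} (hv : v ∉ S) (huv : u ≠ v) (hut : u ≠ t) (hx : x ∈ S) (htx : t ≠ x)
    (ht : t ∈ insert v S) (hin : ∀ r ∈ S, r ≠ x → r ≠ t → ∀ ε, E r ε ≠ t) :
    pathSum (twoEdgeWeight h E) v (S.erase x) u + pathSumVia (twoEdgeWeight h E) v x t S u =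
      contractSum h E v S u x t := by
  have hxv := ne_of_mem_of_not_mem hx hv
  by_cases htv : t = v
  · subst htv
    rw [contractSum, if_pos rfl, pathSumVia_target_sink _ u hxv hv hx, pathSum_eq_zero_of_no_in
      huv (fun h => hv (Finset.mem_of_mem_erase h)), zero_add]
    intro r hr
    obtain ⟨hrx, hr⟩ := Finset.mem_erase.1 hr
    exact twoEdgeWeight_eq_zero h (hin r hr hrx (ne_of_mem_of_not_mem hr hv))
  · rw [contractSum_of_ne h E u hxv htx htv (Finset.mem_of_mem_insert_of_ne ht htv),
      pathSum_erase_of_no_in hut]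
    intro r hr hrt
    obtain ⟨hrx, hr⟩ := Finset.mem_erase.1 hr
    exact twoEdgeWeight_eq_zero h (hin r hr hrx hrt)

end TwoEdgeRows

section PathBound

lemma exists_card_eq_add_two {V : Type*} {S : Finset V} {a b : V} (ha : a ∈ S) (hb : b ∈ S)
    (hab : a ≠ b) : ∃ m, S.card = m + 2 := by
  have : 1 < S.card := Finset.one_lt_card.2 ⟨a, ha, b, hb, hab⟩
  exact ⟨S.card - 2, by omega⟩

/-- The uniform bound on weighted path counts in two-edge digraphs with `m` non-sink vertices:
`c * α ^ m` in general and `α ^ m` in the presence of a useless edge. -/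
def PathBound (V : Type*) [Fintype V] [DecidableEq V] (h c α : ℝ) (m : ℕ) : Prop :=
  ∀ (E : V → Bool → V) (v : V) (S : Finset V) (u : V), Admissible E v S → S.card = m →
    pathSum (twoEdgeWeight h E) v S u ≤ c * α ^ m ∧
      ((∃ r ∈ S, ∃ ε, IsUseless E v S u r ε) → pathSum (twoEdgeWeight h E) v S u ≤ α ^ m)

/-- Relations between the heavy weight `h`, the growth rate `α` and the constant `c`. -/
structure GrowthRate (h c α : ℝ) : Prop where
  one_le : 1 ≤ h
  pos : 0 < α
  sq_eq : α ^ 2 = h * α + 1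
  mul_eq : c * (h ^ 2 + 1) = α ^ 2

namespace GrowthRate

variable {h c α : ℝ}

lemma le_rate (H : GrowthRate h c α) : h ≤ α := by
  nlinarith [H.one_le, H.pos, H.sq_eq]

lemma one_le_rate (H : GrowthRate h c α) : 1 ≤ α := H.one_le.trans H.le_rate

lemma mul_rate_le (H : GrowthRate h c α) : h * α ≤ h ^ 2 + 1 := by
  nlinarith [H.one_le, H.le_rate, H.sq_eq, mul_nonneg (sub_nonneg.2 H.one_le) (sub_nonneg.2 H.le_rate)]

lemma one_le_const (H : GrowthRate h c α) : 1 ≤ c := by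
  have h1 := H.le_rate
  have h2 := H.mul_eq
  have h3 := H.sq_eq
  have h4 := H.one_le
  by_contra! hc
  nlinarith [mul_pos (sub_pos.2 hc) (show 0 < h ^ 2 + 1 by positivity)]

lemma const_le (H : GrowthRate h c α) : c ≤ 5 := by
  have h1 := H.mul_rate_le
  have h2 := H.mul_eq
  have h3 := H.sq_eq
  by_contra! hc
  nlinarith [mul_pos (sub_pos.2 hc) (show 0 < h ^ 2 + 1 by positivity)]

lemma mul_const_le (H : GrowthRate h c α) : h * c ≤ α := by
  have h1 := H.mul_rate_le
  have h2 := H.mul_eq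
  have h3 := H.pos
  have h4 : h * c * (h ^ 2 + 1) ≤ α * (h ^ 2 + 1) := by
    rw [mul_assoc, h2]
    nlinarith [mul_le_mul_of_nonneg_right h1 h3.le]
  exact le_of_mul_le_mul_right h4 (by positivity)

lemma edgeWeight_mul_add_le (H : GrowthRate h c α) (ε : Bool) :
    edgeWeight h ε * α + edgeWeight h (!ε) ≤ α ^ 2 := by
  have h1 := H.one_le
  have h2 := H.one_le_rate
  rw [H.sq_eq]
  cases ε <;> simp only [edgeWeight, cond, Bool.not_true, Bool.not_false]
  · nlinarith [mul_nonneg (sub_nonneg.2 h1) (sub_nonneg.2 h2)]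
  · exact le_rfl

lemma edgeWeight_mul_edgeWeight_add_le (H : GrowthRate h c α) (ε ε' : Bool) :
    edgeWeight h ε * edgeWeight h ε' + edgeWeight h (!ε) ≤ h ^ 2 + 1 := by
  have h1 := H.one_le
  cases ε <;> cases ε' <;> simp only [edgeWeight, cond, Bool.not_true, Bool.not_false] <;>
    nlinarith

lemma pow_le_const_mul_pow (H : GrowthRate h c α) (m : ℕ) : α ^ m ≤ c * α ^ m :=
  le_mul_of_one_le_left (pow_nonneg H.pos.le m) H.one_le_const

lemma const_mul_pow_le (H : GrowthRate h c α) (m : ℕ) : h * (c * α ^ m) ≤ α ^ (m + 1) := by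
  rw [← mul_assoc, pow_succ']
  exact mul_le_mul_of_nonneg_right H.mul_const_le (pow_nonneg H.pos.le m)

end GrowthRate

variable {V : Type*} [Fintype V] [DecidableEq V] {h c α : ℝ}

lemma PathBound.contractSum_le {m : ℕ} (B : PathBound V h c α m) {E : V → Bool → V} {v : V}
    {S : Finset V} (hE : Admissible E v S) (hS : S.card = m + 1) (u : V) {x t : V} (hx : x ∈ S)
    (ht : t ∈ insert v S) : contractSum h E v S u x t ≤ c * α ^ m := by
  rw [contractSum]
  split_ifs with htv
  · exact (B E x (S.erase x) u (hE.erase_self x) (by rw [Finset.card_erase_of_mem hx, hS]; rfl)).1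
  · have htS := Finset.mem_of_mem_insert_of_ne ht htv
    exact (B _ v (S.erase t) u ((hE.update x (hE.2 t htS)).erase t)
      (by rw [Finset.card_erase_of_mem htS, hS]; rfl)).1

lemma PathBound.contractSum_le_pow {m : ℕ} (B : PathBound V h c α m) {E : V → Bool → V} {v : V}
    {S : Finset V} (hE : Admissible E v S) (hS : S.card = m + 1) (u : V) {x t r : V} {ε : Bool}
    (hx : x ∈ S) (htx : t ≠ x) (ht : t ∈ insert v S) (hr : r ∈ S) (hrx : r ≠ x)
    (hu : IsUseless E v S u r ε ∨ r ≠ t ∧ E r ε = t) : contractSum h E v S u x t ≤ α ^ m := by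
  rw [contractSum]
  split_ifs with htv
  · refine (B E x (S.erase x) u (hE.erase_self x)
      (by rw [Finset.card_erase_of_mem hx, hS]; rfl)).2 ⟨r, Finset.mem_erase.2 ⟨hrx, hr⟩, ε, ?_⟩
    rw [IsUseless, Finset.insert_erase hx]
    rcases hu with (hu | hu | hu) | hu
    · exact .inl hu
    · exact .inr (.inl hu)
    · exact .inr (.inr fun h' => hu (Finset.mem_insert_of_mem h'))
    · exact .inr (.inr (hu.2 ▸ htv ▸ hE.1))
  · have htS := Finset.mem_of_mem_insert_of_ne ht htv
    have htE : t ∉ insert v (S.erase t) := by simp [htv]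
    refine (B _ v (S.erase t) u ((hE.update x (hE.2 t htS)).erase t)
      (by rw [Finset.card_erase_of_mem htS, hS]; rfl)).2 ?_
    by_cases hrt : r = t
    · subst hrt
      refine ⟨x, Finset.mem_erase.2 ⟨htx.symm, hx⟩, ε, ?_⟩
      rw [IsUseless, Function.update_self]
      rcases hu with hu | hu
      · rcases hu.erase r with hu | hu | hu
        · exact .inr (.inr (by rwa [hu]))
        · exact .inr (.inl hu)
        · exact .inr (.inr hu)
      · exact absurd rfl hu.1
    · refine ⟨r, Finset.mem_erase.2 ⟨hrt, hr⟩, ε, ?_⟩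
      rw [IsUseless, Function.update_of_ne hrx]
      rcases hu with hu | hu
      · exact hu.erase t
      · exact .inr (.inr (hu.2 ▸ htE))

/-- If `x` is the only in-neighbor of `p`, and the other edge of `x` is useless or `p` is the
sink, then only the contraction of `(x, p)` matters. -/
lemma pathSum_le_of_unique_in (hh : 1 ≤ h) {E : V → Bool → V} {v : V} {S : Finset V} {u x : V}
    {ε : Bool} (hE : Admissible E v S) (huv : u ≠ v) (hup : u ≠ E x ε)
    (hx : x ∈ S) (hpx : E x ε ≠ x) (hp : E x ε ∈ insert v S)
    (hin : ∀ r ∈ S, r ≠ x → r ≠ E x ε → ∀ ε', E r ε' ≠ E x ε)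
    (hq : E x ε = v ∨ IsUseless E v S u x (!ε)) :
    pathSum (twoEdgeWeight h E) v S u ≤ edgeWeight h ε * contractSum h E v S u x (E x ε) := by
  have hxv := ne_of_mem_of_not_mem hx hE.1
  have hW := twoEdgeWeight_nonneg (zero_le_one.trans hh) E
  rcases hq with hq | hq
  · rw [contractSum, if_pos hq, pathSum_eq_sum_last _ huv hE.1, Finset.sum_eq_single_of_mem x hx,
      ← twoEdgeWeight_apply h (hE.2 x hx ε), hq]
    intro r hr hrx
    rw [twoEdgeWeight_eq_zero h fun ε' => hq ▸ hin r hr hrx (hq ▸ ne_of_mem_of_not_mem hr hE.1) ε',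
      zero_mul]
  · rw [← avoid_add_via_eq_contractSum h hE.1 huv hup hx hpx hp hin,
      pathSum_twoEdge h E hxv S u ε, hq.pathSumVia_eq_zero _ hxv (.inl rfl), mul_zero, add_zero,
      mul_add]
    exact add_le_add_left (le_mul_of_one_le_left (pathSum_nonneg hW _ _ _)
      (one_le_edgeWeight hh ε)) _

/-- If `x` is the only in-neighbor of `p`, a path sum is bounded by the contractions of the two
edges of `x`, the second one in the digraph without `p`. -/
lemma pathSum_le_add_of_unique_in (hh : 1 ≤ h) {E : V → Bool → V} {v : V} {S : Finset V} {u x : V}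
    {ε : Bool} (hE : Admissible E v S) (huv : u ≠ v) (hup : u ≠ E x ε)
    (hx : x ∈ S) (hpx : E x ε ≠ x) (hp : E x ε ∈ S)
    (hin : ∀ r ∈ S, r ≠ x → r ≠ E x ε → ∀ ε', E r ε' ≠ E x ε)
    (hq : ¬ IsUseless E v S u x (!ε)) :
    pathSum (twoEdgeWeight h E) v S u ≤ edgeWeight h ε * contractSum h E v S u x (E x ε) +
      edgeWeight h (!ε) * contractSum h E v (S.erase (E x ε)) u x (E x (!ε)) := by
  have hh0 := zero_le_one.trans hh
  have hxv := ne_of_mem_of_not_mem hx hE.1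
  have hW := twoEdgeWeight_nonneg hh0 E
  obtain ⟨hqx, -, hqS⟩ := not_isUseless_iff.1 hq
  have hqp : E x (!ε) ≠ E x ε := (hE.2 x hx ε).symm
  rw [← avoid_add_via_eq_contractSum h hE.1 huv hup hx hpx (Finset.mem_insert_of_mem hp) hin,
    pathSum_twoEdge h E hxv S u ε, mul_add, ← add_assoc]
  refine add_le_add (add_le_add_left (le_mul_of_one_le_left (pathSum_nonneg hW _ _ _)
      (one_le_edgeWeight hh ε)) _) (mul_le_mul_of_nonneg_left ?_ (edgeWeight_nonneg hh0 _))
  rw [pathSumVia_erase_of_no_in hup hqp fun r hr hrx hrp => twoEdgeWeight_eq_zero h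
    (hin r hr hrx hrp)]
  refine pathSumVia_le_contractSum hh0 E u (hE.erase _).1 (Finset.mem_erase.2 ⟨hpx.symm, hx⟩) hqx ?_
  rw [Finset.mem_insert, Finset.mem_erase]
  exact (Finset.mem_insert.1 hqS).imp id fun h' => ⟨hqp, h'⟩

section UniqueInNeighbor

variable {E : V → Bool → V} {v u x : V} {S : Finset V} {ε : Bool}

lemma pathSum_le_pow_of_unique_in_of_useless (H : GrowthRate h c α)
    (B : ∀ j < S.card, PathBound V h c α j) (hE : Admissible E v S) (huv : u ≠ v) (hup : u ≠ E x ε)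
    (hx : x ∈ S) (hpx : E x ε ≠ x) (hp : E x ε ∈ insert v S)
    (hin : ∀ r ∈ S, r ≠ x → r ≠ E x ε → ∀ ε', E r ε' ≠ E x ε)
    (hq : E x ε = v ∨ IsUseless E v S u x (!ε)) :
    pathSum (twoEdgeWeight h E) v S u ≤ α ^ S.card := by
  obtain ⟨m, hm⟩ := Nat.exists_eq_add_one.2 (Finset.card_pos.2 ⟨x, hx⟩)
  have hh0 := zero_le_one.trans H.one_le
  rw [hm]
  calc
    _ ≤ edgeWeight h ε * contractSum h E v S u x (E x ε) :=
      pathSum_le_of_unique_in H.one_le hE huv hup hx hpx hp hin hq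
    _ ≤ edgeWeight h ε * (c * α ^ m) := mul_le_mul_of_nonneg_left
      ((B m (by omega)).contractSum_le hE hm u hx hp) (edgeWeight_nonneg hh0 _)
    _ ≤ h * (c * α ^ m) := mul_le_mul_of_nonneg_right (edgeWeight_le H.one_le _)
      (mul_nonneg (zero_le_one.trans H.one_le_const) (pow_nonneg H.pos.le m))
    _ ≤ α ^ (m + 1) := H.const_mul_pow_le m

lemma pathSum_le_of_unique_in_of_contractSum_le (H : GrowthRate h c α)
    (hE : Admissible E v S) (huv : u ≠ v) (hup : u ≠ E x ε)
    (hx : x ∈ S) (hpx : E x ε ≠ x) (hp : E x ε ∈ S)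
    (hin : ∀ r ∈ S, r ≠ x → r ≠ E x ε → ∀ ε', E r ε' ≠ E x ε)
    (hq : ¬ IsUseless E v S u x (!ε)) {m : ℕ} {d : ℝ} (hd : 0 ≤ d)
    (h1 : contractSum h E v S u x (E x ε) ≤ d * α ^ (m + 1))
    (h2 : contractSum h E v (S.erase (E x ε)) u x (E x (!ε)) ≤ d * α ^ m) :
    pathSum (twoEdgeWeight h E) v S u ≤ d * α ^ (m + 2) := by
  have hh0 := zero_le_one.trans H.one_le
  calc
    _ ≤ edgeWeight h ε * contractSum h E v S u x (E x ε) +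
        edgeWeight h (!ε) * contractSum h E v (S.erase (E x ε)) u x (E x (!ε)) :=
      pathSum_le_add_of_unique_in H.one_le hE huv hup hx hpx hp hin hq
    _ ≤ edgeWeight h ε * (d * α ^ (m + 1)) + edgeWeight h (!ε) * (d * α ^ m) :=
      add_le_add (mul_le_mul_of_nonneg_left h1 (edgeWeight_nonneg hh0 _))
        (mul_le_mul_of_nonneg_left h2 (edgeWeight_nonneg hh0 _))
    _ = d * α ^ m * (edgeWeight h ε * α + edgeWeight h (!ε)) := by ring
    _ ≤ d * α ^ m * α ^ 2 := mul_le_mul_of_nonneg_left (H.edgeWeight_mul_add_le ε)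
      (mul_nonneg hd (pow_nonneg H.pos.le m))
    _ = d * α ^ (m + 2) := by ring

lemma pathSum_le_of_unique_in_general (H : GrowthRate h c α)
    (B : ∀ j < S.card, PathBound V h c α j) (hE : Admissible E v S) (huv : u ≠ v) (hup : u ≠ E x ε)
    (hx : x ∈ S) (hpx : E x ε ≠ x) (hp : E x ε ∈ insert v S)
    (hin : ∀ r ∈ S, r ≠ x → r ≠ E x ε → ∀ ε', E r ε' ≠ E x ε) :
    pathSum (twoEdgeWeight h E) v S u ≤ c * α ^ S.card := by
  by_cases hq : E x ε = v ∨ IsUseless E v S u x (!ε)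
  · exact (pathSum_le_pow_of_unique_in_of_useless H B hE huv hup hx hpx hp hin hq).trans
      (H.pow_le_const_mul_pow _)
  rw [not_or] at hq
  have hpS := Finset.mem_of_mem_insert_of_ne hp hq.1
  obtain ⟨m, hm⟩ := exists_card_eq_add_two hpS hx hpx
  obtain ⟨-, -, hqS⟩ := not_isUseless_iff.1 hq.2
  rw [hm]
  refine pathSum_le_of_unique_in_of_contractSum_le H hE huv hup hx hpx hpS hin hq.2
    (zero_le_one.trans H.one_le_const) ((B (m + 1) (by omega)).contractSum_le hE hm u hx hp)
    ((B m (by omega)).contractSum_le (hE.erase _) ?_ u (Finset.mem_erase.2 ⟨hpx.symm, hx⟩) ?_)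
  · rw [Finset.card_erase_of_mem hpS, hm]; rfl
  · rw [Finset.mem_insert, Finset.mem_erase]
    exact (Finset.mem_insert.1 hqS).imp id fun h' => ⟨(hE.2 x hx ε).symm, h'⟩

/-- The bound `α ^ m` when the digraph without `p = E x ε` has, after contracting the other edge
of `x`, a useless edge coming from `w`. -/
lemma pathSum_le_pow_of_unique_in (H : GrowthRate h c α)
    (B : ∀ j < S.card, PathBound V h c α j) (hE : Admissible E v S) (huv : u ≠ v) (hup : u ≠ E x ε)
    (hx : x ∈ S) (hpx : E x ε ≠ x) (hp : E x ε ∈ insert v S)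
    (hin : ∀ r ∈ S, r ≠ x → r ≠ E x ε → ∀ ε', E r ε' ≠ E x ε)
    {r w : V} {ε₁ ε₂ : Bool} (hr : r ∈ S) (hrx : r ≠ x) (hru : IsUseless E v S u r ε₁)
    (hw : w ∈ S) (hwx : w ≠ x) (hwp : w ≠ E x ε)
    (hwu : IsUseless E v S u w ε₂ ∨ w ≠ E x (!ε) ∧ E w ε₂ = E x (!ε)) :
    pathSum (twoEdgeWeight h E) v S u ≤ α ^ S.card := by
  by_cases hq : E x ε = v ∨ IsUseless E v S u x (!ε)
  · exact pathSum_le_pow_of_unique_in_of_useless H B hE huv hup hx hpx hp hin hq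
  rw [not_or] at hq
  have hpS := Finset.mem_of_mem_insert_of_ne hp hq.1
  obtain ⟨m, hm⟩ := exists_card_eq_add_two hpS hx hpx
  obtain ⟨hqx, -, hqS⟩ := not_isUseless_iff.1 hq.2
  rw [hm, ← one_mul (α ^ (m + 2))]
  refine pathSum_le_of_unique_in_of_contractSum_le H hE huv hup hx hpx hpS hin hq.2
    zero_le_one ?_ ?_ <;> rw [one_mul]
  · exact (B (m + 1) (by omega)).contractSum_le_pow hE hm u hx hpx hp hr hrx (.inl hru)
  · refine (B m (by omega)).contractSum_le_pow (hE.erase _) ?_ u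
      (Finset.mem_erase.2 ⟨hpx.symm, hx⟩) hqx ?_ (Finset.mem_erase.2 ⟨hwp, hw⟩) hwx
      (hwu.imp (fun h' => h'.erase _) id)
    · rw [Finset.card_erase_of_mem hpS, hm]; rfl
    · rw [Finset.mem_insert, Finset.mem_erase]
      exact (Finset.mem_insert.1 hqS).imp id fun h' => ⟨(hE.2 x hx ε).symm, h'⟩

/-- The gadget in which `p = E x ε` has the single in-neighbor `x`, the edges `(x, p)`, `(p, q)`,
`(x, q)` are the only ones entering `q = E x (!ε)`, and the other edge of `p` is useless. -/
lemma pathSum_le_pow_of_gadget (H : GrowthRate h c α)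
    (B : ∀ j < S.card, PathBound V h c α j) (hE : Admissible E v S) (huv : u ≠ v) (hup : u ≠ E x ε)
    (hx : x ∈ S) (hpx : E x ε ≠ x) (hp : E x ε ∈ S)
    (hin : ∀ r ∈ S, r ≠ x → r ≠ E x ε → ∀ ε', E r ε' ≠ E x ε)
    (hq : ¬ IsUseless E v S u x (!ε))
    {ε₁ : Bool} (hpq : E (E x ε) ε₁ = E x (!ε)) (hpu : IsUseless E v S u (E x ε) (!ε₁))
    (hinq : ∀ r ∈ S, r ≠ x → r ≠ E x ε → r ≠ E x (!ε) → ∀ ε', E r ε' ≠ E x (!ε)) :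
    pathSum (twoEdgeWeight h E) v S u ≤ α ^ S.card := by
  obtain ⟨m, hm⟩ := exists_card_eq_add_two hp hx hpx
  have hh0 := zero_le_one.trans H.one_le
  have hxv := ne_of_mem_of_not_mem hx hE.1
  have hpv := ne_of_mem_of_not_mem hp hE.1
  obtain ⟨hqx, hqu, hqS⟩ := not_isUseless_iff.1 hq
  have hqp : E x (!ε) ≠ E x ε := (hE.2 x hx ε).symm
  have hxS : x ∈ S.erase (E x ε) := Finset.mem_erase.2 ⟨hpx.symm, hx⟩
  have hqS' : E x (!ε) ∈ insert v (S.erase (E x ε)) := by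
    rw [Finset.mem_insert, Finset.mem_erase]
    exact (Finset.mem_insert.1 hqS).imp id fun h' => ⟨hqp, h'⟩
  set W := twoEdgeWeight h E with hWdef
  have hW : ∀ a b, 0 ≤ W a b := twoEdgeWeight_nonneg hh0 E
  set a := pathSum W v ((S.erase (E x ε)).erase x) u with ha
  set b := pathSumVia W v x (E x (!ε)) (S.erase (E x ε)) u with hb
  have hzero : ∀ r ∈ S, r ≠ x → r ≠ E x ε → W r (E x ε) = 0 := fun r hr hrx hrp =>
    twoEdgeWeight_eq_zero h (hin r hr hrx hrp)
  have hBp : pathSumVia W v x (E x ε) S u = edgeWeight h ε₁ * b := by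
    have hpu' : pathSumVia W v x (E (E x ε) (!ε₁)) (S.erase (E x ε)) u = 0 :=
      (hpu.erase _).pathSumVia_eq_zero W hxv (.inr (by simp [hpv]))
    rw [pathSumVia_eq_sum W u hpx hpv hp, hWdef, sum_twoEdgeWeight_mul h E _ _ ε₁, ← hWdef, hpu',
      hpq, mul_zero, add_zero]
  have hBq : pathSumVia W v x (E x (!ε)) S u = b :=
    pathSumVia_erase_of_no_in hup hqp hzero
  have hA : pathSum W v (S.erase x) u = a := by
    rw [pathSum_erase_of_no_in hup, Finset.erase_right_comm]
    intro r hr hrp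
    exact hzero r (Finset.mem_of_mem_erase hr) (Finset.ne_of_mem_erase hr) hrp
  have hab : a + b = contractSum h E v (S.erase (E x ε)) u x (E x (!ε)) :=
    avoid_add_via_eq_contractSum h (hE.erase _).1 huv hqu.symm hxS hqx hqS' fun r hr hrx hrq =>
      hinq r (Finset.mem_of_mem_erase hr) hrx (Finset.ne_of_mem_erase hr) hrq
  have hle : a + b ≤ c * α ^ m := hab ▸ (B m (by omega)).contractSum_le (hE.erase _)
    (by rw [Finset.card_erase_of_mem hp, hm]; rfl) u hxS hqS'
  have ha0 : 0 ≤ a := pathSum_nonneg hW _ _ _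
  have hb0 : 0 ≤ b := pathSumVia_nonneg hW _ _ _ _ _
  rw [hWdef, pathSum_twoEdge h E hxv S u ε, ← hWdef, hBp, hBq, hA, hm]
  have hw := H.edgeWeight_mul_edgeWeight_add_le ε ε₁
  calc
    _ = a + (edgeWeight h ε * edgeWeight h ε₁ + edgeWeight h (!ε)) * b := by ring
    _ ≤ (h ^ 2 + 1) * (a + b) := by nlinarith [mul_le_mul_of_nonneg_right hw hb0, sq_nonneg h]
    _ ≤ (h ^ 2 + 1) * (c * α ^ m) := mul_le_mul_of_nonneg_left hle (by positivity)
    _ = c * (h ^ 2 + 1) * α ^ m := by ring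
    _ = α ^ (m + 2) := by rw [H.mul_eq]; ring

end UniqueInNeighbor

section Induction

variable {E : V → Bool → V} {v u : V} {S : Finset V}

lemma pathSum_le_of_inNeighbors_card_le_one (H : GrowthRate h c α)
    (B : ∀ j < S.card, PathBound V h c α j) (hE : Admissible E v S) (huv : u ≠ v)
    {p : V} (hp : p ∈ insert v (S.erase u)) (hcard : (inNeighbors E S p).card ≤ 1) :
    pathSum (twoEdgeWeight h E) v S u ≤ c * α ^ S.card ∧
      ((∃ r ∈ S, ∃ ε, IsUseless E v S u r ε) →
        pathSum (twoEdgeWeight h E) v S u ≤ α ^ S.card) := by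
  have hup : u ≠ p := by
    rintro rfl
    simp [huv] at hp
  have hpS : p ∈ insert v S := Finset.insert_subset_insert _ (Finset.erase_subset _ _) hp
  rcases Nat.le_one_iff_eq_zero_or_eq_one.1 hcard with hcard | hcard
  · have hzero : ∀ r ∈ S, r ≠ p → twoEdgeWeight h E r p = 0 := fun r hr hrp =>
      twoEdgeWeight_eq_zero h fun ε hε => Finset.notMem_empty r
        (Finset.card_eq_zero.1 hcard ▸ mem_inNeighbors.2 ⟨hr, hrp, ε, hε⟩)
    suffices hN : pathSum (twoEdgeWeight h E) v S u ≤ α ^ S.card from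
      ⟨hN.trans (H.pow_le_const_mul_pow _), fun _ => hN⟩
    by_cases hpv : p = v
    · subst hpv
      rw [pathSum_eq_zero_of_no_in huv hE.1 fun r hr =>
        hzero r hr (ne_of_mem_of_not_mem hr hE.1)]
      exact pow_nonneg H.pos.le _
    · have hpS' := Finset.mem_of_mem_insert_of_ne hpS hpv
      obtain ⟨m, hm⟩ := Nat.exists_eq_add_one.2 (Finset.card_pos.2 ⟨p, hpS'⟩)
      rw [pathSum_erase_of_no_in hup hzero, hm]
      have hc := mul_nonneg (zero_le_one.trans H.one_le_const) (pow_nonneg H.pos.le m)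
      exact ((B m (by omega) E v _ u (hE.erase p)
        (by rw [Finset.card_erase_of_mem hpS', hm]; rfl)).1.trans
        (le_mul_of_one_le_left hc H.one_le)).trans (H.const_mul_pow_le m)
  obtain ⟨x, hxeq⟩ := Finset.card_eq_one.1 hcard
  obtain ⟨hx, hpx, ε, rfl⟩ := mem_inNeighbors.1 (hxeq ▸ Finset.mem_singleton_self x)
  have hin : ∀ r ∈ S, r ≠ x → r ≠ E x ε → ∀ ε', E r ε' ≠ E x ε := fun r hr hrx hrp ε' hε' =>
    hrx (Finset.mem_singleton.1 (hxeq ▸ mem_inNeighbors.2 ⟨hr, hrp, ε', hε'⟩))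
  replace hpx := hpx.symm
  refine ⟨pathSum_le_of_unique_in_general H B hE huv hup hx hpx hpS hin, ?_⟩
  rintro ⟨r, hr, ε₀, hrε⟩
  by_cases hq : E x ε = v ∨ IsUseless E v S u x (!ε)
  · exact pathSum_le_pow_of_unique_in_of_useless H B hE huv hup hx hpx hpS hin hq
  rw [not_or] at hq
  obtain ⟨hqx, hqu, hqS⟩ := not_isUseless_iff.1 hq.2
  have hrx : r ≠ x := by
    rintro rfl
    have hpu : ¬ IsUseless E v S u r ε := not_isUseless_iff.2 ⟨hpx, hup.symm, hpS⟩
    rcases Bool.eq_or_eq_not ε₀ ε with rfl | rfl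
    exacts [hpu hrε, hq.2 hrε]
  by_cases hrp : r = E x ε
  swap
  · exact pathSum_le_pow_of_unique_in H B hE huv hup hx hpx hpS hin hr hrx hrε hr hrx hrp
      (.inl hrε)
  by_cases hw : ∃ w ∈ S, w ≠ x ∧ w ≠ E x ε ∧ w ≠ E x (!ε) ∧ ∃ ε', E w ε' = E x (!ε)
  · obtain ⟨w, hw, hwx, hwp, hwq, ε', hwε⟩ := hw
    exact pathSum_le_pow_of_unique_in H B hE huv hup hx hpx hpS hin hr hrx hrε hw hwx hwp
      (.inr ⟨hwq, hwε⟩)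
  push Not at hw
  by_cases hpq : ∃ ε₁, E r ε₁ = E x (!ε)
  · obtain ⟨ε₁, hε₁⟩ := hpq
    have hε : ε₀ = !ε₁ := by
      rcases Bool.eq_or_eq_not ε₀ ε₁ with rfl | h'
      · rw [IsUseless, hε₁, hrp] at hrε
        exact absurd hrε (by
          rw [not_or, not_or, not_not]
          exact ⟨(hE.2 x hx ε).symm, hqu, hqS⟩)
      · exact h'
    subst hε hrp
    exact pathSum_le_pow_of_gadget H B hE huv hup hx hpx hr hin hq.2 hε₁ hrε hw
  · push Not at hpq
    refine pathSum_le_pow_of_unique_in (ε := !ε) H B hE huv hqu.symm hx hqx hqS ?_ hr hrx hrε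
      hr hrx (hrp ▸ hE.2 x hx ε) (.inl hrε)
    intro w hwS hwx hwq
    by_cases hwr : w = r
    · exact hwr ▸ hpq
    · exact hw w hwS hwx (hrp ▸ hwr) hwq

/-- Deleting the edge from `r₂` into the former sink and redirecting the other edge of `r₂`. -/
lemma exists_avoid_add_via_le (H : GrowthRate h c α) {m : ℕ} (B : PathBound V h c α m)
    (hE : Admissible E v S) (hS : S.card = m + 1) {r₁ r₂ : V} (h₁ : r₁ ∈ S) (h₂ : r₂ ∈ S)
    (h₁₂ : r₁ ≠ r₂) {ε : Bool} (hε : E r₂ ε = v) (u : V) :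
    ∃ b, 0 ≤ b ∧ pathSum (twoEdgeWeight h E) r₁ (S.erase r₁) u =
        pathSum (twoEdgeWeight h E) r₁ ((S.erase r₁).erase r₂) u + edgeWeight h (!ε) * b ∧
      pathSum (twoEdgeWeight h E) r₁ ((S.erase r₁).erase r₂) u + h * b ≤ α ^ m ∧
      pathSum (twoEdgeWeight h E) r₁ ((S.erase r₁).erase r₂) u +
        h * pathSum (twoEdgeWeight h E) r₂ ((S.erase r₂).erase r₁) u ≤ α ^ m := by
  have hh0 := zero_le_one.trans H.one_le
  have hW := twoEdgeWeight_nonneg hh0 E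
  have h₂' : r₂ ∈ S.erase r₁ := Finset.mem_erase.2 ⟨h₁₂.symm, h₂⟩
  have key : ∀ t, t ≠ r₂ → pathSum (twoEdgeWeight h E) r₁ ((S.erase r₁).erase r₂) u +
      h * pathSumVia (twoEdgeWeight h E) r₁ r₂ t (S.erase r₁) u ≤ α ^ m := by
    intro t ht
    set E' := Function.update E r₂ fun ε' => cond ε' t r₂ with hE'
    have hrow : ∀ r, r ≠ r₂ → twoEdgeWeight h E' r = twoEdgeWeight h E r := by
      intro r hr
      rw [hE', twoEdgeWeight_update, Function.update_of_ne hr]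
    have hbound := (B E' r₁ (S.erase r₁) u ((hE.erase_self r₁).update r₂
      (by simpa using ⟨ht.symm, ht⟩)) (by rw [Finset.card_erase_of_mem h₁, hS]; rfl)).2
      ⟨r₂, h₂', false, .inl (by simp [hE'])⟩
    rw [pathSum_twoEdge h E' h₁₂.symm _ u true,
      pathSum_congr (W' := twoEdgeWeight h E) r₁ _ u fun r hr =>
        hrow r (Finset.ne_of_mem_erase hr),
      pathSumVia_congr (W' := twoEdgeWeight h E) r₁ r₂ _ _ u fun r _ hr => hrow r hr,
      show E' r₂ (!true) = r₂ by simp [hE'], pathSumVia_target_self _ h₁₂.symm, mul_zero, add_zero,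
      show E' r₂ true = t by simp [hE']] at hbound
    exact hbound
  have ha' := key r₁ h₁₂
  rw [pathSumVia_target_sink _ u h₁₂.symm (Finset.notMem_erase _ _) h₂',
    Finset.erase_right_comm] at ha'
  rw [Finset.erase_right_comm (a := r₁) (b := r₂)]
  refine ⟨pathSumVia (twoEdgeWeight h E) r₁ r₂ (E r₂ (!ε)) (S.erase r₁) u,
    pathSumVia_nonneg hW _ _ _ _ _, ?_, ?_, ha'⟩
  · have hv : IsUseless E r₁ (S.erase r₁) u r₂ ε := by
      refine .inr (.inr ?_)
      rw [hε, Finset.insert_erase h₁]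
      exact hE.1
    rw [pathSum_twoEdge h E h₁₂.symm _ u ε, hv.pathSumVia_eq_zero _ h₁₂.symm (.inl rfl), mul_zero,
      zero_add, Finset.erase_right_comm]
  · by_cases ht : E r₂ (!ε) = r₂
    · rw [ht, pathSumVia_target_self _ h₁₂.symm, mul_zero, add_zero]
      exact (le_add_of_nonneg_right (mul_nonneg hh0 (pathSum_nonneg hW _ _ _))).trans ha'
    · rw [Finset.erase_right_comm]
      exact key _ ht

/-- The numerical inequality behind the case of a sink with two in-neighbors. -/
lemma two_inNeighbors_numeric (H : GrowthRate h c α) {a b a' b' D : ℝ} (hb : 0 ≤ b)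
    (hb' : 0 ≤ b') (h1 : a + h * b ≤ D) (h2 : a + h * a' ≤ D) (h3 : a' + h * b' ≤ D)
    (h4 : a' + h * a ≤ D) (ha : 0 ≤ a) (ha' : 0 ≤ a') (ε₁ ε₂ : Bool) :
    edgeWeight h ε₁ * (a + edgeWeight h (!ε₂) * b) +
      edgeWeight h ε₂ * (a' + edgeWeight h (!ε₁) * b') ≤ c * α * D := by
  have hh := H.one_le
  have hD : 0 ≤ D := by nlinarith
  have hR : h ^ 3 + 3 * h ≤ c * α * (h ^ 2 + 1) := by
    have e : c * α * (h ^ 2 + 1) = α * (h * α + 1) := by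
      rw [← H.sq_eq, ← H.mul_eq]; ring
    rw [e]
    nlinarith [H.mul_rate_le, H.sq_eq, H.le_rate, H.pos]
  have hpos : 0 < h ^ 2 + 1 := by positivity
  have hmix : ∀ {a b a' b' : ℝ}, 0 ≤ b → 0 ≤ b' → a + h * b ≤ D → a + h * a' ≤ D →
      a' + h * b' ≤ D → 0 ≤ a → 0 ≤ a' → h * (a + h * b) + (a' + b') ≤ c * α * D := by
    intro a b a' b' hb hb' h1 h2 h3 ha ha'
    have hN : h ^ 2 * (h * (a + h * b) + (a' + b')) ≤ (h ^ 3 + 2 * h - 1) * D := by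
      nlinarith [mul_le_mul_of_nonneg_left h1 (show 0 ≤ h ^ 3 by positivity),
        mul_le_mul_of_nonneg_left h3 (show 0 ≤ h by positivity),
        mul_le_mul_of_nonneg_left h2 (sub_nonneg.2 hh), mul_nonneg (sub_nonneg.2 hh) ha]
    have h5 : (h ^ 3 + 2 * h - 1) * (h ^ 2 + 1) ≤ h ^ 2 * (c * α * (h ^ 2 + 1)) := by
      nlinarith [mul_le_mul_of_nonneg_left hR (sq_nonneg h), sq_nonneg (h - 1)]
    have h6 : h ^ 3 + 2 * h - 1 ≤ h ^ 2 * (c * α) :=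
      le_of_mul_le_mul_right (by linarith) hpos
    refine le_of_mul_le_mul_left (a := h ^ 2) ?_ (by positivity)
    nlinarith [mul_le_mul_of_nonneg_right h6 hD]
  cases ε₁ <;> cases ε₂ <;> simp only [edgeWeight, cond, Bool.not_true, Bool.not_false, one_mul]
  · have h5 : 2 ≤ c * α := by
      refine le_of_mul_le_mul_right (a := h ^ 2 + 1) ?_ hpos
      nlinarith [mul_nonneg (sub_nonneg.2 hh) (show 0 ≤ h ^ 2 - h + 2 by nlinarith)]
    nlinarith [mul_le_mul_of_nonneg_right h5 hD]
  · linarith [hmix hb' hb h3 h4 h1 ha' ha]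
  · linarith [hmix hb hb' h1 h2 h3 ha ha']
  · have hN : (h + 1) * (h * (a + b) + h * (a' + b')) ≤ 4 * h * D := by
      nlinarith [mul_le_mul_of_nonneg_left h2 (sub_nonneg.2 hh),
        mul_le_mul_of_nonneg_left h4 (sub_nonneg.2 hh),
        mul_le_mul_of_nonneg_left h1 (show 0 ≤ h + 1 by positivity),
        mul_le_mul_of_nonneg_left h3 (show 0 ≤ h + 1 by positivity)]
    have h5 : 4 * h * (h ^ 2 + 1) ≤ (h + 1) * (c * α * (h ^ 2 + 1)) := by
      nlinarith [mul_le_mul_of_nonneg_left hR (show 0 ≤ h + 1 by positivity),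
        mul_nonneg (show 0 ≤ h by positivity) (pow_nonneg (sub_nonneg.2 hh) 3)]
    have h6 : 4 * h ≤ (h + 1) * (c * α) := le_of_mul_le_mul_right (by linarith) hpos
    refine le_of_mul_le_mul_left (a := h + 1) ?_ (by positivity)
    nlinarith [mul_le_mul_of_nonneg_right h6 hD]

lemma pathSum_le_of_sink_card_eq_two (H : GrowthRate h c α)
    (B : ∀ j < S.card, PathBound V h c α j) (hE : Admissible E v S) (huv : u ≠ v)
    (hcard : (inNeighbors E S v).card = 2) :
    pathSum (twoEdgeWeight h E) v S u ≤ c * α ^ S.card := by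
  obtain ⟨r₁, r₂, h₁₂, heq⟩ := Finset.card_eq_two.1 hcard
  obtain ⟨h₁, -, ε₁, hε₁⟩ := mem_inNeighbors.1 (heq ▸ Finset.mem_insert_self r₁ {r₂})
  obtain ⟨h₂, -, ε₂, hε₂⟩ := mem_inNeighbors.1
    (heq ▸ Finset.mem_insert_of_mem (Finset.mem_singleton_self r₂))
  obtain ⟨m, hm⟩ := Nat.exists_eq_add_one.2 (Finset.card_pos.2 ⟨r₁, h₁⟩)
  have hW := twoEdgeWeight_nonneg (zero_le_one.trans H.one_le) E
  obtain ⟨b, hb, hP, h1, h2⟩ := exists_avoid_add_via_le H (B m (by omega)) hE hm h₁ h₂ h₁₂ hε₂ u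
  obtain ⟨b', hb', hP', h3, h4⟩ :=
    exists_avoid_add_via_le H (B m (by omega)) hE hm h₂ h₁ h₁₂.symm hε₁ u
  have hsum : pathSum (twoEdgeWeight h E) v S u =
      edgeWeight h ε₁ * pathSum (twoEdgeWeight h E) r₁ (S.erase r₁) u +
        edgeWeight h ε₂ * pathSum (twoEdgeWeight h E) r₂ (S.erase r₂) u := by
    rw [pathSum_eq_sum_last _ huv hE.1, ← Finset.sum_subset (s₁ := {r₁, r₂}),
      Finset.sum_pair h₁₂, ← twoEdgeWeight_apply h (hE.2 r₁ h₁ ε₁), hε₁,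
      ← twoEdgeWeight_apply h (hE.2 r₂ h₂ ε₂), hε₂]
    · rw [← heq]
      exact Finset.filter_subset _ _
    · intro r hr hr'
      rw [twoEdgeWeight_eq_zero h, zero_mul]
      exact fun ε hε => hr' (heq ▸ mem_inNeighbors.2 ⟨hr, ne_of_mem_of_not_mem hr hE.1, ε, hε⟩)
  rw [hsum, hP, hP', hm, pow_succ', ← mul_assoc]
  exact two_inNeighbors_numeric H hb hb' h1 h2 h3 h4 (pathSum_nonneg hW _ _ _)
    (pathSum_nonneg hW _ _ _) ε₁ ε₂

theorem pathBound (V : Type*) [Fintype V] [DecidableEq V] (H : GrowthRate h c α) (m : ℕ) :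
    PathBound V h c α m := by
  induction m using Nat.strong_induction_on with
  | _ m B =>
    intro E v S u hE hS
    subst hS
    by_cases huv : u = v
    · rw [huv, pathSum_self]
      exact ⟨(one_le_pow₀ H.one_le_rate).trans (H.pow_le_const_mul_pow _),
        fun _ => one_le_pow₀ H.one_le_rate⟩
    by_cases hu : u ∈ S
    · rcases exists_inNeighbors_card_le_one E hE.1 hu with ⟨p, hp, hcard⟩ | ⟨huse, hcard⟩
      · exact pathSum_le_of_inNeighbors_card_le_one H B hE huv hp hcard
      · exact ⟨pathSum_le_of_sink_card_eq_two H B hE huv hcard,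
          fun ⟨r, hr, ε, hε⟩ => absurd hε (huse r hr ε)⟩
    · rw [pathSum_of_notMem huv hu]
      have h0 := pow_nonneg H.pos.le S.card
      exact ⟨h0.trans (H.pow_le_const_mul_pow _), fun _ => h0⟩

end Induction

end PathBound

section Linearization

variable {V : Type*} [Fintype V] [DecidableEq V] {h c α : ℝ}

/-- A linear functional vanishing at `x` is maximized over capped rows by a heavy and a light
edge. -/
lemma exists_two_edges_ge {w b : V → ℝ} {x v : V} (hvx : v ≠ x) (hw : ∀ t, 0 ≤ w t)
    (hsum : ∑ t, w t = h + 1) (hcap : ∀ t, t ≠ x → w t ≤ h) (hb : ∀ t, 0 ≤ b t) (hbx : b x = 0) :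
    ∃ ρ : Bool → V, (∀ ε, ρ ε ≠ ρ (!ε)) ∧ ∑ t, w t * b t ≤ h * b (ρ true) + b (ρ false) := by
  obtain ⟨y, -, hy⟩ := Finset.exists_max_image Finset.univ b ⟨x, Finset.mem_univ x⟩
  have hne : (Finset.univ.erase y).Nonempty := by
    by_cases hxy : x = y
    · exact ⟨v, Finset.mem_erase.2 ⟨hxy ▸ hvx, Finset.mem_univ v⟩⟩
    · exact ⟨x, Finset.mem_erase.2 ⟨hxy, Finset.mem_univ x⟩⟩
  obtain ⟨z, hz, hzmax⟩ := Finset.exists_max_image _ b hne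
  have hzy := Finset.ne_of_mem_erase hz
  refine ⟨fun ε => cond ε y z, by simpa using ⟨hzy, hzy.symm⟩, ?_⟩
  simp only [cond]
  have hyz := hy z (Finset.mem_univ z)
  by_cases hyx : y = x
  · have hzero : ∀ t, b t = 0 := fun t =>
      le_antisymm ((hy t (Finset.mem_univ t)).trans_eq (hyx ▸ hbx)) (hb t)
    simp [hzero]
  · have hrest : ∑ t ∈ Finset.univ.erase y, w t * b t ≤
        (∑ t ∈ Finset.univ.erase y, w t) * b z := by
      rw [Finset.sum_mul]
      exact Finset.sum_le_sum fun t ht => mul_le_mul_of_nonneg_left (hzmax t ht) (hw t)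
    rw [← Finset.add_sum_erase _ _ (Finset.mem_univ y)] at hsum ⊢
    have hS : ∑ t ∈ Finset.univ.erase y, w t = h + 1 - w y := by linarith
    rw [hS] at hrest
    nlinarith [mul_nonneg (sub_nonneg.2 (hcap y hyx)) (sub_nonneg.2 hyz)]

lemma exists_twoEdgeWeight_ge (hh : 0 ≤ h) {W : V → V → ℝ} (hW : ∀ r t, 0 ≤ W r t)
    (hsum : ∀ r, ∑ t, W r t = h + 1) (hcap : ∀ r t, r ≠ t → W r t ≤ h) {v : V} {S : Finset V}
    (hv : v ∉ S) (u : V) :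
    ∃ E, Admissible E v S ∧ pathSum W v S u ≤ pathSum (twoEdgeWeight h E) v S u := by
  suffices hT : ∀ T ⊆ S, ∃ E : V → Bool → V, (∀ r ∈ T, ∀ ε, E r ε ≠ E r (!ε)) ∧
      pathSum W v S u ≤ pathSum (fun r => if r ∈ T then twoEdgeWeight h E r else W r) v S u by
    obtain ⟨E, hE, hle⟩ := hT S subset_rfl
    exact ⟨E, ⟨hv, hE⟩, hle.trans_eq (pathSum_congr v S u fun r hr => if_pos hr)⟩
  intro T
  induction T using Finset.induction_on with
  | empty => exact fun _ => ⟨fun r _ => r, by simp, by simp⟩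
  | insert x T hxT ih =>
    intro hTS
    obtain ⟨E, hE, hle⟩ := ih fun r hr => hTS (Finset.mem_insert_of_mem hr)
    have hxv : x ≠ v := ne_of_mem_of_not_mem (hTS (Finset.mem_insert_self x T)) hv
    set W₁ : V → V → ℝ := fun r => if r ∈ T then twoEdgeWeight h E r else W r with hW₁
    have hW₁0 : ∀ r t, 0 ≤ W₁ r t := by
      intro r t
      simp only [hW₁]
      split_ifs
      exacts [twoEdgeWeight_nonneg hh E r t, hW r t]
    obtain ⟨ρ, hρ, hρle⟩ := exists_two_edges_ge (b := fun t => pathSumVia W₁ v x t S u)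
      hxv.symm (hW x) (hsum x) (fun t ht => hcap x t ht.symm)
      (fun t => pathSumVia_nonneg hW₁0 v x t S u) (pathSumVia_target_self W₁ hxv S u)
    refine ⟨Function.update E x ρ, ?_, hle.trans ?_⟩
    · intro r hr ε
      by_cases hrx : r = x
      · subst hrx; simpa using hρ ε
      · simpa [hrx] using hE r (Finset.mem_of_mem_insert_of_ne hr hrx) ε
    · set W₂ : V → V → ℝ :=
        fun r => if r ∈ insert x T then twoEdgeWeight h (Function.update E x ρ) r else W r with hW₂
      have hrow : ∀ r, r ≠ x → W₂ r = W₁ r := by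
        intro r hr
        simp only [hW₂, hW₁, Finset.mem_insert, hr, false_or, twoEdgeWeight_update,
          Function.update_of_ne hr]
      have hrowx : W₂ x = twoEdgeWeight h (Function.update E x ρ) x :=
        if_pos (Finset.mem_insert_self x T)
      have hrowx₁ : W₁ x = W x := if_neg hxT
      rw [pathSum_eq_avoid_add_via W₁ hxv, pathSum_eq_avoid_add_via W₂ hxv,
        pathSum_congr (W := W₂) (W' := W₁) v _ u fun r hr => hrow r (Finset.ne_of_mem_erase hr),
        hrowx, hrowx₁, sum_twoEdgeWeight_mul h _ x _ true, Function.update_self]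
      simp only [fun t => pathSumVia_congr (W := W₂) (W' := W₁) v x t S u fun r _ hr => hrow r hr]
      simpa [edgeWeight] using hρle

theorem pathSum_le_of_capped_rows (H : GrowthRate h c α) {W : V → V → ℝ}
    (hW : ∀ r t, 0 ≤ W r t) (hsum : ∀ r, ∑ t, W r t = h + 1) (hcap : ∀ r t, r ≠ t → W r t ≤ h)
    {v : V} {S : Finset V} (hv : v ∉ S) (u : V) : pathSum W v S u ≤ c * α ^ S.card := by
  obtain ⟨E, hE, hle⟩ := exists_twoEdgeWeight_ge (zero_le_one.trans H.one_le) hW hsum hcap hv u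
  exact hle.trans (pathBound V H _ E v S u hE rfl).1

end Linearization

section Orbits

variable {V : Type*} [DecidableEq V]

/-- The vertices visited by iterating `f` from `u` inside `S`, stopping at the first vertex that is
not in `S` or was visited before. -/
noncomputable def visited (f : V → V) (S : Finset V) (u : V) : Finset V :=
  if _h : u ∈ S then insert u (visited f (S.erase u) (f u)) else ∅
termination_by S.card
decreasing_by exact Finset.card_erase_lt_of_mem _h

lemma visited_of_mem {f : V → V} {S : Finset V} {u : V} (hu : u ∈ S) :
    visited f S u = insert u (visited f (S.erase u) (f u)) := by
  rw [visited, dif_pos hu]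

lemma visited_of_notMem {f : V → V} {S : Finset V} {u : V} (hu : u ∉ S) : visited f S u = ∅ := by
  rw [visited, dif_neg hu]

lemma visited_subset (f : V → V) (S : Finset V) (u : V) : visited f S u ⊆ S := by
  induction S using Finset.strongInduction generalizing u with
  | H S ih =>
    by_cases hu : u ∈ S
    · rw [visited_of_mem hu]
      exact Finset.insert_subset hu
        ((ih _ (Finset.erase_ssubset hu) _).trans (Finset.erase_subset _ _))
    · rw [visited_of_notMem hu]
      exact Finset.empty_subset S

lemma visited_subset_of_closed {f : V → V} {s : Finset V} (hs : ∀ r ∈ s, f r ∈ s) (S : Finset V)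
    {u : V} (hu : u ∈ s) : visited f S u ⊆ s := by
  induction S using Finset.strongInduction generalizing u with
  | H S ih =>
    by_cases huS : u ∈ S
    · rw [visited_of_mem huS]
      exact Finset.insert_subset hu (ih _ (Finset.erase_ssubset huS) (hs u hu))
    · rw [visited_of_notMem huS]
      exact Finset.empty_subset s

lemma visited_congr {f g : V → V} (S : Finset V) (u : V) (hfg : ∀ r ∈ S, f r = g r) :
    visited f S u = visited g S u := by
  induction S using Finset.strongInduction generalizing u with
  | H S ih =>
    by_cases hu : u ∈ S
    · rw [visited_of_mem hu, visited_of_mem hu, hfg u hu,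
        ih _ (Finset.erase_ssubset hu) _ fun r hr => hfg r (Finset.mem_of_mem_erase hr)]
    · rw [visited_of_notMem hu, visited_of_notMem hu]

lemma apply_mem_visited {f : V → V} {S : Finset V} {u r : V} (hr : r ∈ visited f S u)
    (hfr : f r ∈ S) : f r ∈ visited f S u := by
  induction S using Finset.strongInduction generalizing u with
  | H S ih =>
    by_cases hu : u ∈ S
    · rw [visited_of_mem hu] at hr ⊢
      by_cases hfu : f r = u
      · rw [hfu]; exact Finset.mem_insert_self _ _
      have hfr' : f r ∈ S.erase u := Finset.mem_erase.2 ⟨hfu, hfr⟩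
      refine Finset.mem_insert_of_mem ?_
      rcases Finset.mem_insert.1 hr with rfl | hr
      · rw [visited_of_mem hfr']
        exact Finset.mem_insert_self _ _
      · exact ih _ (Finset.erase_ssubset hu) hr hfr'
    · rw [visited_of_notMem hu] at hr
      exact absurd hr (Finset.notMem_empty r)

variable [Fintype V]

/-- A weakly connected functional digraph with at most one source is a single orbit. -/
lemma exists_visited_eq {f : V → V} {s : Finset V} (hne : s.Nonempty) (hf : ∀ r ∈ s, f r ∈ s)
    (hconn : ∀ u ∈ s, ∀ v ∈ s,
      Relation.ReflTransGen (fun a b => (a ∈ s ∧ f a = b) ∨ (b ∈ s ∧ f b = a)) u v)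
    (hsrc : (s.filter fun v => ∀ u ∈ s, f u ≠ v).card ≤ 1) :
    ∃ u, visited f Finset.univ u = s := by
  obtain ⟨u, hu, huniq⟩ : ∃ u ∈ s, ∀ v ∈ s, v ≠ u → ∃ w ∈ s, f w = v := by
    by_cases hsource : ∃ u ∈ s, ∀ w ∈ s, f w ≠ u
    · obtain ⟨u, hu, hsu⟩ := hsource
      refine ⟨u, hu, fun v hv hvu => ?_⟩
      by_contra! hsv
      exact hvu (Finset.card_le_one.1 hsrc v (Finset.mem_filter.2 ⟨hv, hsv⟩) u
        (Finset.mem_filter.2 ⟨hu, hsu⟩))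
    · push Not at hsource
      obtain ⟨u, hu⟩ := hne
      exact ⟨u, hu, fun v hv _ => hsource v hv⟩
  refine ⟨u, (visited_subset_of_closed hf _ hu).antisymm fun r hr => ?_⟩
  have hclosed : ∀ a ∈ visited f Finset.univ u, f a ∈ visited f Finset.univ u :=
    fun a ha => apply_mem_visited ha (Finset.mem_univ _)
  have huO : u ∈ visited f Finset.univ u := by
    rw [visited_of_mem (Finset.mem_univ u)]
    exact Finset.mem_insert_self _ _
  have hsub : s \ visited f Finset.univ u ⊆ (s \ visited f Finset.univ u).image f := by
    intro b hb
    obtain ⟨hbs, hbO⟩ := Finset.mem_sdiff.1 hb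
    obtain ⟨w, hw, rfl⟩ := huniq b hbs fun hbu => hbO (hbu ▸ huO)
    exact Finset.mem_image_of_mem f (Finset.mem_sdiff.2 ⟨hw, fun hwO => hbO (hclosed w hwO)⟩)
  have heq := Finset.eq_of_subset_of_card_le hsub Finset.card_image_le
  have hpres : ∀ b, Relation.ReflTransGen (fun a b => (a ∈ s ∧ f a = b) ∨ (b ∈ s ∧ f b = a)) u b →
      b ∈ visited f Finset.univ u := by
    intro b hb
    induction hb with
    | refl => exact huO
    | tail _ hstep ih =>
      rcases hstep with ⟨-, rfl⟩ | ⟨hbs, rfl⟩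
      · exact hclosed _ ih
      · by_contra hbO
        have hmem := Finset.mem_image_of_mem f (Finset.mem_sdiff.2 ⟨hbs, hbO⟩)
        rw [← heq] at hmem
        exact (Finset.mem_sdiff.1 hmem).2 ih
  exact hpres r (hconn u hu r hr)

end Orbits

section PathCycles

variable {V : Type*} [Fintype V] [DecidableEq V]

/-- The weighted number of orbits started at `u` and confined to `S`; functions are normalized to
be the identity off the orbit. -/
noncomputable def orbitSum (W : V → V → ℝ) (S : Finset V) (u : V) : ℝ :=
  ∑ f : V → V, if ∀ r, r ∉ visited f S u → f r = r then ∏ r ∈ visited f S u, W r (f r) else 0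

lemma orbitSum_of_notMem (W : V → V → ℝ) {S : Finset V} {u : V} (hu : u ∉ S) :
    orbitSum W S u = 1 := by
  rw [orbitSum, Finset.sum_eq_single_of_mem id (Finset.mem_univ _)]
  · simp [visited_of_notMem hu]
  · intro f _ hf
    rw [if_neg]
    rw [visited_of_notMem hu]
    exact fun h => hf (funext fun r => h r (Finset.notMem_empty r))

lemma orbitSum_of_mem (W : V → V → ℝ) {S : Finset V} {u : V} (hu : u ∈ S) :
    orbitSum W S u = ∑ t, W u t * orbitSum W (S.erase u) t := by
  have hnot : ∀ (f : V → V) t, u ∉ visited f (S.erase u) t := fun f t h =>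
    Finset.notMem_erase u S (visited_subset f _ t h)
  have hupd : ∀ (f : V → V) t a, visited (Function.update f u a) (S.erase u) t =
      visited f (S.erase u) t := fun f t a =>
    visited_congr _ _ fun r hr => Function.update_of_ne (Finset.ne_of_mem_erase hr) _ _
  simp only [orbitSum, ← Finset.sum_filter, Finset.mul_sum]
  rw [Finset.sum_sigma']
  refine Finset.sum_bij' (fun f _ => ⟨f u, Function.update f u u⟩)
    (fun p _ => Function.update p.2 u p.1) ?_ ?_ ?_ ?_ ?_
  · intro f hf
    have hf := (Finset.mem_filter.1 hf).2
    rw [visited_of_mem hu] at hf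
    refine Finset.mem_sigma.2 ⟨Finset.mem_univ _, Finset.mem_filter.2 ⟨Finset.mem_univ _, ?_⟩⟩
    intro r hr
    dsimp only at hr ⊢
    by_cases hru : r = u
    · rw [hru, Function.update_self]
    · rw [Function.update_of_ne hru]
      rw [hupd] at hr
      exact hf r (by simp [hru, hr])
  · rintro ⟨t, f⟩ hf
    have hf := (Finset.mem_filter.1 (Finset.mem_sigma.1 hf).2).2
    refine Finset.mem_filter.2 ⟨Finset.mem_univ _, fun r hr => ?_⟩
    rw [visited_of_mem hu, Function.update_self, hupd, Finset.mem_insert, not_or] at hr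
    rw [Function.update_of_ne hr.1]
    exact hf r hr.2
  · intro f _
    simp
  · rintro ⟨t, f⟩ hf
    have hf := (Finset.mem_filter.1 (Finset.mem_sigma.1 hf).2).2
    have hfu : f u = u := hf u (hnot f t)
    simp [hfu]
  · intro f _
    rw [visited_of_mem hu, Finset.prod_insert (hnot _ _), hupd]
    congr 1
    refine Finset.prod_congr rfl fun r hr => ?_
    dsimp only
    rw [Function.update_of_ne (ne_of_mem_of_not_mem hr (hnot f (f u)))]

lemma orbitSum_le {W : V → V → ℝ} (hW : ∀ r t, 0 ≤ W r t) {K : ℝ} (hsum : ∀ r, ∑ t, W r t = K)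
    (S : Finset V) (u : V) : orbitSum W S u ≤
      (if u ∈ S then 0 else 1) + K * ∑ v ∈ S, pathSum W v (S.erase v) u := by
  induction S using Finset.strongInduction generalizing u with
  | H S ih =>
    have hK : 0 ≤ K := hsum u ▸ Finset.sum_nonneg fun t _ => hW u t
    by_cases hu : u ∈ S
    · have hrec : ∑ v ∈ S, pathSum W v (S.erase v) u =
          1 + ∑ t, W u t * ∑ v ∈ S.erase u, pathSum W v ((S.erase u).erase v) t := by
        rw [← Finset.add_sum_erase _ _ hu, pathSum_self]
        simp only [Finset.mul_sum]
        rw [Finset.sum_comm]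
        congr 1
        refine Finset.sum_congr rfl fun v hv => ?_
        have huv := (Finset.ne_of_mem_erase hv).symm
        rw [pathSum_of_mem huv (Finset.mem_erase.2 ⟨huv, hu⟩), Finset.erase_right_comm]
      rw [orbitSum_of_mem W hu, if_pos hu, zero_add, hrec, mul_add, mul_one, ← hsum u,
        Finset.mul_sum, ← Finset.sum_add_distrib]
      refine Finset.sum_le_sum fun t _ => ?_
      rw [hsum u]
      have hbound := mul_le_mul_of_nonneg_left (ih _ (Finset.erase_ssubset hu) t) (hW u t)
      refine hbound.trans ?_
      rw [mul_add]
      refine add_le_add (mul_le_of_le_one_right (hW u t) (by split_ifs <;> simp)) (le_of_eq ?_)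
      ring
    · rw [orbitSum_of_notMem W hu, if_neg hu]
      exact le_add_of_nonneg_right (mul_nonneg hK (Finset.sum_nonneg fun v _ =>
        pathSum_nonneg hW _ _ _))

lemma pathCycleCount_le_sum_orbitSum (G : V → V → ℕ) :
    (pathCycleCount G : ℝ) ≤ ∑ u, orbitSum (fun r t => (G r t : ℝ)) Finset.univ u := by
  simp only [orbitSum]
  rw [pathCycleCount, Finset.sum_comm, Finset.sum_comm (s := Finset.univ (α := V))]
  push_cast
  refine Finset.sum_le_sum fun f _ => ?_
  have hnonneg : ∀ u, (0 : ℝ) ≤ if ∀ r, r ∉ visited f Finset.univ u → f r = r then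
      ∏ r ∈ visited f Finset.univ u, (G r (f r) : ℝ) else 0 := by
    intro u
    split_ifs
    exacts [Finset.prod_nonneg fun _ _ => Nat.cast_nonneg _, le_rfl]
  rw [← Finset.sum_fiberwise (s := Finset.univ (α := V)) (g := fun u => visited f Finset.univ u)]
  refine Finset.sum_le_sum fun s _ => ?_
  split_ifs with hs
  · obtain ⟨hne, hoff, hf, hconn, hsrc⟩ := hs
    obtain ⟨u, hu⟩ := exists_visited_eq hne hf hconn (by convert hsrc)
    refine le_trans ?_ (Finset.single_le_sum (fun u _ => hnonneg u)
      (Finset.mem_filter.2 ⟨Finset.mem_univ u, hu⟩))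
    simp only [hu]
    rw [if_pos hoff]
  · exact Finset.sum_nonneg fun u _ => hnonneg u

end PathCycles

lemma growthRate_alphaK {k : ℕ} (hk : 2 ≤ k) :
    GrowthRate ((k : ℝ) - 1) (alphaK k ^ 2 / (((k : ℝ) - 1) ^ 2 + 1)) (alphaK k) where
  one_le := by
    have : (2 : ℝ) ≤ k := by exact_mod_cast hk
    linarith
  pos := by
    have : (2 : ℝ) ≤ k := by exact_mod_cast hk
    rw [alphaK]
    have := Real.sqrt_nonneg (((k : ℝ) - 1) ^ 2 + 4)
    linarith
  sq_eq := by
    have := Real.sq_sqrt (show 0 ≤ ((k : ℝ) - 1) ^ 2 + 4 by positivity)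
    rw [alphaK]
    nlinarith
  mul_eq := div_mul_cancel₀ _ (by positivity)

theorem stmt_8 (n k : ℕ) (hn : 1 ≤ n) (hk : 2 ≤ k) (G : Fin n → Fin n → ℕ)
    (hdeg : ∀ v : Fin n, (∑ u, G v u) = k)
    (hmult : ∀ u v : Fin n, u ≠ v → G u v ≤ k - 1) :
    (pathCycleCount G : ℝ) ≤ 5 * (n : ℝ) ^ 2 * (k : ℝ) * alphaK k ^ (n - 1) := by
  have H := growthRate_alphaK hk
  set W : Fin n → Fin n → ℝ := fun r t => (G r t : ℝ) with hWdef
  have hW : ∀ r t, 0 ≤ W r t := fun r t => Nat.cast_nonneg _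
  have hsum : ∀ r, ∑ t, W r t = k := fun r => by rw [← hdeg r, Nat.cast_sum]
  have hcap : ∀ r t, r ≠ t → W r t ≤ (k : ℝ) - 1 := by
    intro r t hrt
    have h := Nat.cast_le (α := ℝ).2 (hmult r t hrt)
    rwa [Nat.cast_sub (by omega), Nat.cast_one] at h
  have hpath : ∀ u v, pathSum W v (Finset.univ.erase v) u ≤ 5 * alphaK k ^ (n - 1) := by
    intro u v
    have h := pathSum_le_of_capped_rows H hW (fun r => by rw [hsum, sub_add_cancel]) hcap
      (Finset.notMem_erase v Finset.univ) u
    rw [Finset.card_erase_of_mem (Finset.mem_univ v), Finset.card_univ, Fintype.card_fin] at h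
    exact h.trans (mul_le_mul_of_nonneg_right H.const_le (pow_nonneg H.pos.le _))
  have horbit : ∀ u, orbitSum W Finset.univ u ≤ k * (n * (5 * alphaK k ^ (n - 1))) := by
    intro u
    have h := orbitSum_le hW hsum Finset.univ u
    rw [if_pos (Finset.mem_univ u), zero_add] at h
    refine h.trans (mul_le_mul_of_nonneg_left ?_ (Nat.cast_nonneg k))
    simpa using Finset.sum_le_card_nsmul _ _ _ fun v (_ : v ∈ Finset.univ) => hpath u v
  calc
    (pathCycleCount G : ℝ) ≤ ∑ u, orbitSum W Finset.univ u := pathCycleCount_le_sum_orbitSum G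
    _ ≤ n * (k * (n * (5 * alphaK k ^ (n - 1)))) := by
      simpa using Finset.sum_le_card_nsmul _ _ _ fun u (_ : u ∈ Finset.univ) => horbit u
    _ = 5 * (n : ℝ) ^ 2 * (k : ℝ) * alphaK k ^ (n - 1) := by ring
end
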